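/- arXiv:2308.15026 — 2 statements merged into one kernel-verified Lean document; each statement's English description precedes it below -/
import Mathlib

section
/- Let ζ ∈ (-1/2, ∞). Then there exist constants c₁, c₂, c₃, c₄ > 0 (depending only on ζ) such that for all r, s, t > 0: c₁ · t^{-1/2} · exp(-(r-s)²/(c₂ t)) · (rs + t)^{-ζ} ≤ p_ζ^{(2)}(t,r,s) ≤ c₃ · t^{-1/2} · exp(-(r-s)²/(c₄ t)) · (rs + t)^{-ζ}. -/
open MeasureTheory Real Set Filter

/-- Modified Bessel function of the first kind of order `ν`. -/
noncomputable def besselI (ν x : ℝ) : ℝ :=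
  ∑' k : ℕ, (x / 2) ^ (2 * (k : ℝ) + ν) / ((Nat.factorial k : ℝ) * Real.Gamma ((k : ℝ) + ν + 1))

/-- The Bessel heat kernel `p_ζ^{(2)}(t,r,s)`. -/
noncomputable def besselHeat (ζ t r s : ℝ) : ℝ :=
  (r * s) ^ ((1 : ℝ) / 2 - ζ) / (2 * t) * Real.exp (-(r ^ 2 + s ^ 2) / (4 * t)) *
    besselI (ζ - 1 / 2) (r * s / (2 * t))

theorem exists_pos_bounds_of_tendsto {f : ℕ → ℝ} {l : ℝ} (hl : 0 < l) (hf : ∀ n, 0 < f n)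
    (h : Tendsto f atTop (nhds l)) : ∃ c C : ℝ, 0 < c ∧ 0 < C ∧ ∀ n, c ≤ f n ∧ f n ≤ C := by
  obtain ⟨C, hC⟩ := h.bddAbove_range
  obtain ⟨D, hD⟩ := (h.inv₀ hl.ne').bddAbove_range
  have hC' : ∀ n, f n ≤ C := fun n => hC ⟨n, rfl⟩
  have hD' : ∀ n, (f n)⁻¹ ≤ D := fun n => hD ⟨n, rfl⟩
  have hDpos : 0 < D := (inv_pos.2 (hf 0)).trans_le (hD' 0)
  exact ⟨D⁻¹, C, inv_pos.2 hDpos, (hf 0).trans_le (hC' 0), fun n =>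
    ⟨inv_le_of_inv_le₀ (hf n) (hD' n), hC' n⟩⟩

theorem Gamma_nat_add_succ {a : ℝ} (ha : 0 < a) (n : ℕ) :
    Gamma ((n + 1 : ℕ) + a) = Gamma a * ∏ j ∈ Finset.range (n + 1), (a + j) := by
  induction n with
  | zero => simp [add_comm (1 : ℝ) a, Gamma_add_one ha.ne', mul_comm]
  | succ n ih =>
    rw [Finset.prod_range_succ, ← mul_assoc, ← ih,
      show ((n + 1 + 1 : ℕ) : ℝ) + a = ((n + 1 : ℕ) + a) + 1 by push_cast; ring,
      Gamma_add_one (by positivity)]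
    ring

theorem tendsto_Gamma_nat_add_div {a : ℝ} (ha : 0 < a) :
    Tendsto (fun k : ℕ => Gamma (k + a) / (((k : ℝ) + 1) ^ (a - 1) * k.factorial)) atTop
      (nhds 1) := by
  rw [← tendsto_add_atTop_iff_nat 1]
  have hG := Gamma_pos_of_pos ha
  have h1 : Tendsto (fun n => Gamma a / GammaSeq a n) atTop (nhds 1) := by
    rw [← div_self hG.ne']
    exact (tendsto_const_nhds (x := Gamma a)).div (GammaSeq_tendsto_Gamma a) hG.ne'
  have h2 : Tendsto (fun n : ℕ => ((n : ℝ) / ((n : ℝ) + 2)) ^ a) atTop (nhds 1) := by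
    simpa using (tendsto_natCast_div_add_atTop (2 : ℝ)).rpow_const (p := a) (Or.inl one_ne_zero)
  have h3 : Tendsto (fun n : ℕ => 1 + 1 / ((n : ℝ) + 1)) atTop (nhds 1) := by
    simpa using (tendsto_one_div_add_atTop_nhds_zero_nat (𝕜 := ℝ)).const_add 1
  have h := (h1.mul h2).mul h3
  simp only [mul_one] at h
  refine h.congr' ?_
  filter_upwards [eventually_gt_atTop 0] with n hn
  have hn' : (0 : ℝ) < n := by exact_mod_cast hn
  have hP : 0 < ∏ j ∈ Finset.range (n + 1), (a + j) := Finset.prod_pos fun j _ => by positivity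
  rw [Gamma_nat_add_succ ha, GammaSeq, div_rpow hn'.le (by positivity), Nat.factorial_succ,
    show ((n + 1 : ℕ) : ℝ) + 1 = (n : ℝ) + 2 by push_cast; ring, rpow_sub_one (by positivity)]
  push_cast
  field_simp
  ring

theorem Gamma_half_div_Gamma_bounds {a : ℝ} (ha : 0 < a) :
    ∃ c C : ℝ, 0 < c ∧ 0 < C ∧ ∀ k : ℕ,
      c * ((k : ℝ) + 1) ^ (1 / 2 - a) ≤ Gamma (k + 1 / 2) / Gamma (k + a) ∧
      Gamma (k + 1 / 2) / Gamma (k + a) ≤ C * ((k : ℝ) + 1) ^ (1 / 2 - a) := by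
  have hG (b : ℝ) (hb : 0 < b) (k : ℕ) : 0 < Gamma (k + b) := Gamma_pos_of_pos (by positivity)
  have hlim := (tendsto_Gamma_nat_add_div one_half_pos).div (tendsto_Gamma_nat_add_div ha)
    one_ne_zero
  obtain ⟨c, C, hc, hC, h⟩ := exists_pos_bounds_of_tendsto (by norm_num) (fun k => by
    have := hG a ha k
    have := hG (1 / 2) one_half_pos k
    simp only [Pi.div_apply]
    positivity) hlim
  refine ⟨c, C, hc, hC, fun k => ?_⟩
  have hk : (0 : ℝ) < (k : ℝ) + 1 := by positivity
  have := hG a ha k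
  have key : Gamma (k + 1 / 2) / Gamma (k + a) =
      Gamma (k + 1 / 2) / (((k : ℝ) + 1) ^ ((1 / 2 : ℝ) - 1) * k.factorial) /
        (Gamma (k + a) / (((k : ℝ) + 1) ^ (a - 1) * k.factorial)) *
        ((k : ℝ) + 1) ^ (1 / 2 - a) := by
    rw [show (1 / 2 - a : ℝ) = (1 / 2 - 1) - (a - 1) by ring, rpow_sub hk (1 / 2 - 1)]
    field_simp
  rw [key]
  exact ⟨mul_le_mul_of_nonneg_right (h k).1 (by positivity),
    mul_le_mul_of_nonneg_right (h k).2 (by positivity)⟩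

theorem sum_exp_terms_mul_pow_le (m : ℕ) : ∃ C : ℝ, 0 < C ∧ ∀ x : ℝ, 0 ≤ x → ∀ N : ℕ,
    ∑ n ∈ Finset.range N, x ^ n / n.factorial * ((n : ℝ) + 1) ^ m ≤ C * (1 + x) ^ m * exp x := by
  induction m with
  | zero => exact ⟨1, one_pos, fun x hx N => by simpa using sum_le_exp_of_nonneg hx N⟩
  | succ m ih =>
    obtain ⟨C, hC, h⟩ := ih
    refine ⟨2 ^ m * C, by positivity, fun x hx N => ?_⟩
    have hshift : ∑ n ∈ Finset.range N, x ^ n / n.factorial * ((n : ℝ) + 1) ^ m * n ≤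
        2 ^ m * x * (C * (1 + x) ^ m * exp x) := by
      cases N with
      | zero => simp; positivity
      | succ N =>
        rw [Finset.sum_range_succ']
        simp only [Nat.cast_zero, mul_zero, add_zero]
        refine le_trans ?_ (mul_le_mul_of_nonneg_left (h x hx N) (by positivity))
        rw [Finset.mul_sum]
        refine Finset.sum_le_sum fun n _ => ?_
        calc x ^ (n + 1) / (n + 1).factorial * (((n + 1 : ℕ) : ℝ) + 1) ^ m * (n + 1 : ℕ)
            = x * (x ^ n / n.factorial * ((n : ℝ) + 2) ^ m) := by
              rw [Nat.factorial_succ]; push_cast; field_simp; ring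
          _ ≤ x * (x ^ n / n.factorial * (2 * ((n : ℝ) + 1)) ^ m) := by
              gcongr; linarith
          _ = _ := by rw [mul_pow]; ring
    calc ∑ n ∈ Finset.range N, x ^ n / n.factorial * ((n : ℝ) + 1) ^ (m + 1)
        = ∑ n ∈ Finset.range N, x ^ n / n.factorial * ((n : ℝ) + 1) ^ m * n +
          ∑ n ∈ Finset.range N, x ^ n / n.factorial * ((n : ℝ) + 1) ^ m := by
          rw [← Finset.sum_add_distrib]
          exact Finset.sum_congr rfl fun n _ => by ring
      _ ≤ 2 ^ m * x * (C * (1 + x) ^ m * exp x) + 2 ^ m * (C * (1 + x) ^ m * exp x) :=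
          add_le_add hshift ((h x hx N).trans
            (le_mul_of_one_le_left (by positivity) (one_le_pow₀ one_le_two)))
      _ = _ := by ring

theorem sum_exp_terms_div_pow_le (m : ℕ) : ∃ C : ℝ, 0 < C ∧ ∀ x : ℝ, 0 ≤ x → ∀ N : ℕ,
    ∑ n ∈ Finset.range N, x ^ n / n.factorial / ((n : ℝ) + 1) ^ m ≤ C / (1 + x) ^ m * exp x := by
  induction m with
  | zero => exact ⟨1, one_pos, fun x hx N => by simpa using sum_le_exp_of_nonneg hx N⟩
  | succ m ih =>
    obtain ⟨C, hC, h⟩ := ih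
    refine ⟨(1 + 2 ^ m) * C, by positivity, fun x hx N => ?_⟩
    have hx1 : 0 < 1 + x := by positivity
    have hshift : ∑ n ∈ Finset.range N, x * (x ^ n / n.factorial / ((n : ℝ) + 1) ^ (m + 1)) ≤
        2 ^ m * (C / (1 + x) ^ m * exp x) := by
      refine le_trans ?_ (mul_le_mul_of_nonneg_left (h x hx (N + 1)) (by positivity))
      rw [Finset.mul_sum, Finset.sum_range_succ']
      refine le_add_of_le_of_nonneg (Finset.sum_le_sum fun n _ => ?_) (by positivity)
      calc x * (x ^ n / n.factorial / ((n : ℝ) + 1) ^ (m + 1))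
          = 2 ^ m * (x ^ (n + 1) / (n + 1).factorial / (2 * ((n : ℝ) + 1)) ^ m) := by
            rw [Nat.factorial_succ, mul_pow]; push_cast; field_simp; ring
        _ ≤ _ := by gcongr; push_cast; linarith
    have hbase : ∑ n ∈ Finset.range N, x ^ n / n.factorial / ((n : ℝ) + 1) ^ (m + 1) ≤
        C / (1 + x) ^ m * exp x := by
      refine le_trans (Finset.sum_le_sum fun n _ => ?_) (h x hx N)
      gcongr
      · linarith [n.cast_nonneg (α := ℝ)]
      · simp
    rw [← Finset.mul_sum] at hshift
    rw [← mul_le_mul_iff_right₀ hx1]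
    calc _ ≤ C / (1 + x) ^ m * exp x + 2 ^ m * (C / (1 + x) ^ m * exp x) := by
            rw [add_mul, one_mul]; exact add_le_add hbase hshift
      _ = _ := by rw [pow_succ]; field_simp

theorem tsum_cosh_terms_mul_moment_le (m : ℕ) : ∃ C : ℝ, 0 < C ∧ ∀ x : ℝ, 0 ≤ x →
    Summable (fun k : ℕ => x ^ (2 * k) / (2 * k).factorial *
      ((((k : ℝ) + 1) / (1 + x)) ^ m + ((1 + x) / ((k : ℝ) + 1)) ^ m)) ∧
    ∑' k : ℕ, x ^ (2 * k) / (2 * k).factorial *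
      ((((k : ℝ) + 1) / (1 + x)) ^ m + ((1 + x) / ((k : ℝ) + 1)) ^ m) ≤ C * exp x := by
  obtain ⟨C, hC, h⟩ := sum_exp_terms_mul_pow_le m
  obtain ⟨D, hD, h'⟩ := sum_exp_terms_div_pow_le m
  refine ⟨C + 2 ^ m * D, by positivity, fun x hx => ?_⟩
  have hx1 : 0 < 1 + x := by positivity
  set g : ℕ → ℝ := fun n => x ^ n / n.factorial *
    ((((n : ℝ) + 1) / (1 + x)) ^ m + 2 ^ m * ((1 + x) / ((n : ℝ) + 1)) ^ m) with hg
  have hg0 (n : ℕ) : 0 ≤ g n := by positivity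
  have hgN (N : ℕ) : ∑ n ∈ Finset.range N, g n ≤ (C + 2 ^ m * D) * exp x := by
    calc ∑ n ∈ Finset.range N, g n
        = (∑ n ∈ Finset.range N, x ^ n / n.factorial * ((n : ℝ) + 1) ^ m) / (1 + x) ^ m +
          2 ^ m * (1 + x) ^ m *
            ∑ n ∈ Finset.range N, x ^ n / n.factorial / ((n : ℝ) + 1) ^ m := by
          rw [Finset.sum_div, Finset.mul_sum, ← Finset.sum_add_distrib]
          refine Finset.sum_congr rfl fun n _ => ?_
          simp only [hg, div_pow]
          field_simp
      _ ≤ (C * (1 + x) ^ m * exp x) / (1 + x) ^ m +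
          2 ^ m * (1 + x) ^ m * (D / (1 + x) ^ m * exp x) := by
          gcongr
          · exact h x hx N
          · exact h' x hx N
      _ = _ := by field_simp
  have hinj : Function.Injective (fun k : ℕ => 2 * k) := fun a b hab => by
    simpa using hab
  have hsg : Summable g := summable_of_sum_range_le hg0 hgN
  have hsg2 : Summable fun k : ℕ => g (2 * k) := hsg.comp_injective hinj
  have hle (k : ℕ) : x ^ (2 * k) / (2 * k).factorial *
      ((((k : ℝ) + 1) / (1 + x)) ^ m + ((1 + x) / ((k : ℝ) + 1)) ^ m) ≤ g (2 * k) := by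
    simp only [hg]
    rw [← mul_pow]
    have hk : (0 : ℝ) ≤ k := k.cast_nonneg
    gcongr
    · lia
    · rw [mul_div_assoc', div_le_div_iff₀ (by positivity) (by positivity)]
      push_cast
      nlinarith
  have hs := Summable.of_nonneg_of_le (fun k => by positivity) hle hsg2
  exact ⟨hs, (hs.tsum_le_tsum hle hsg2).trans ((tsum_comp_le_tsum_of_inj hsg hg0 hinj).trans
    (Real.tsum_le_of_sum_range_le hg0 hgN))⟩

theorem tsum_cosh_terms_mul_rpow_bounds (p : ℝ) : ∃ c C : ℝ, 0 < c ∧ 0 < C ∧ ∀ x : ℝ, 0 ≤ x →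
    Summable (fun k : ℕ => x ^ (2 * k) / (2 * k).factorial * ((k : ℝ) + 1) ^ p) ∧
    c * exp x * (1 + x) ^ p ≤ ∑' k : ℕ, x ^ (2 * k) / (2 * k).factorial * ((k : ℝ) + 1) ^ p ∧
    ∑' k : ℕ, x ^ (2 * k) / (2 * k).factorial * ((k : ℝ) + 1) ^ p ≤ C * exp x * (1 + x) ^ p := by
  obtain ⟨m, hm⟩ := exists_nat_ge |p|
  have hrpow (v : ℝ) (hv : 0 < v) (q : ℝ) (hq : |q| ≤ m) : v ^ q ≤ v ^ m + v⁻¹ ^ m := by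
    rw [← rpow_natCast, ← rpow_natCast, inv_rpow hv.le, ← rpow_neg hv.le]
    rcases le_total 1 v with h1 | h1
    · exact le_add_of_le_of_nonneg (rpow_le_rpow_of_exponent_le h1 (abs_le.1 hq).2)
        (by positivity)
    · exact le_add_of_nonneg_of_le (by positivity)
        (rpow_le_rpow_of_exponent_ge hv h1 (abs_le.1 hq).1)
  obtain ⟨C, hC, hY⟩ := tsum_cosh_terms_mul_moment_le m
  refine ⟨1 / (4 * C), C, by positivity, hC, fun x hx => ?_⟩
  obtain ⟨hsY, hY⟩ := hY x hx
  have hx1 : 0 < 1 + x := by positivity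
  set e : ℕ → ℝ := fun k => x ^ (2 * k) / (2 * k).factorial with he
  have he0 (k : ℕ) : 0 ≤ e k := by positivity
  set Y : ℕ → ℝ := fun k => (((k : ℝ) + 1) / (1 + x)) ^ m + ((1 + x) / ((k : ℝ) + 1)) ^ m with hYd
  change Summable (fun k => e k * Y k) at hsY
  change ∑' k, e k * Y k ≤ C * exp x at hY
  have hv (k : ℕ) : 0 < ((k : ℝ) + 1) / (1 + x) := by positivity
  have hYpos (k : ℕ) : 0 < Y k := by positivity
  have hup (k : ℕ) : e k * (((k : ℝ) + 1) / (1 + x)) ^ p ≤ e k * Y k := by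
    refine mul_le_mul_of_nonneg_left ?_ (he0 k)
    simpa [hYd] using hrpow _ (hv k) p hm
  have hlow (k : ℕ) : (1 / C) * e k - (1 / (4 * C ^ 2)) * (e k * Y k) ≤
      e k * (((k : ℝ) + 1) / (1 + x)) ^ p := by
    have h1 : (Y k)⁻¹ ≤ (((k : ℝ) + 1) / (1 + x)) ^ p := by
      have := hrpow _ (hv k) (-p) (by rwa [abs_neg])
      rw [rpow_neg (hv k).le] at this
      refine inv_le_of_inv_le₀ (by positivity) ?_
      simpa [hYd] using this
    have h2 : 1 / C - 1 / (4 * C ^ 2) * Y k ≤ (Y k)⁻¹ := by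
      have hY0 := hYpos k
      rw [← sub_nonneg]
      have : (Y k)⁻¹ - (1 / C - 1 / (4 * C ^ 2) * Y k) = (2 * C - Y k) ^ 2 / (4 * C ^ 2 * Y k) := by
        field_simp; ring
      rw [this]; positivity
    calc _ = e k * (1 / C - 1 / (4 * C ^ 2) * Y k) := by ring
      _ ≤ _ := mul_le_mul_of_nonneg_left (h2.trans h1) (he0 k)
  have hs : Summable fun k : ℕ => e k * (((k : ℝ) + 1) / (1 + x)) ^ p :=
    Summable.of_nonneg_of_le (fun k => mul_nonneg (he0 k) (rpow_nonneg (hv k).le p)) hup hsY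
  have heq (k : ℕ) : e k * ((k : ℝ) + 1) ^ p =
      e k * (((k : ℝ) + 1) / (1 + x)) ^ p * (1 + x) ^ p := by
    rw [div_rpow (by positivity) hx1.le]
    field_simp
  have hcosh : HasSum e (cosh x) := hasSum_cosh x
  rw [show (fun k : ℕ => x ^ (2 * k) / (2 * k).factorial * ((k : ℝ) + 1) ^ p) = _ from funext heq,
    tsum_mul_right]
  refine ⟨hs.mul_right _, ?_, ?_⟩
  · refine mul_le_mul_of_nonneg_right ?_ (by positivity)
    have hd := (hcosh.summable.mul_left (1 / C)).sub (hsY.mul_left (1 / (4 * C ^ 2)))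
    refine le_trans ?_ (hd.tsum_le_tsum hlow hs)
    rw [(hcosh.summable.mul_left (1 / C)).tsum_sub (hsY.mul_left (1 / (4 * C ^ 2))),
      tsum_mul_left, tsum_mul_left, hcosh.tsum_eq, cosh_eq]
    calc 1 / (4 * C) * exp x = 1 / C * (exp x / 2) - 1 / (4 * C ^ 2) * (C * exp x) := by
          field_simp; ring
      _ ≤ _ := by
          gcongr
          linarith [exp_pos (-x)]
  · exact mul_le_mul_of_nonneg_right ((hs.tsum_le_tsum hup hsY).trans hY) (by positivity)

theorem besselI_term_eq {a x : ℝ} (hx : 0 < x) (k : ℕ) :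
    (x / 2) ^ (2 * (k : ℝ) + (a - 1)) / ((Nat.factorial k : ℝ) * Gamma ((k : ℝ) + (a - 1) + 1)) =
      (x / 2) ^ (a - 1) / √π *
        (x ^ (2 * k) / (2 * k).factorial * (Gamma (k + 1 / 2) / Gamma (k + a))) := by
  have hdup := Gamma_mul_Gamma_add_half ((k : ℝ) + 1 / 2)
  rw [show (k : ℝ) + 1 / 2 + 1 / 2 = k + 1 by ring, Gamma_nat_eq_factorial,
    show 2 * ((k : ℝ) + 1 / 2) = (2 * k : ℕ) + 1 by push_cast; ring, Gamma_nat_eq_factorial,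
    show (1 : ℝ) - ((2 * k : ℕ) + 1) = -((2 * k : ℕ) : ℝ) by ring, rpow_neg two_pos.le,
    rpow_natCast] at hdup
  have hf : (k.factorial : ℝ) ≠ 0 := by positivity
  have hG : Gamma ((k : ℝ) + 1 / 2) =
      (2 * k).factorial * (2 ^ (2 * k))⁻¹ * √π / k.factorial := by
    rw [eq_div_iff hf, hdup]
  rw [hG, show (k : ℝ) + (a - 1) + 1 = k + a by ring, rpow_add (by positivity),
    show (2 * (k : ℝ)) = ((2 * k : ℕ) : ℝ) by push_cast; ring, rpow_natCast, div_pow x 2 (2 * k)]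
  have hpi : √π ≠ 0 := (sqrt_pos.2 pi_pos).ne'
  have h2k : ((2 * k).factorial : ℝ) ≠ 0 := by positivity
  field_simp

theorem besselI_bounds {ν : ℝ} (hν : -1 < ν) : ∃ c C : ℝ, 0 < c ∧ 0 < C ∧ ∀ x : ℝ, 0 < x →
    c * (x ^ ν * exp x * (1 + x) ^ (-(ν + 1 / 2))) ≤ besselI ν x ∧
    besselI ν x ≤ C * (x ^ ν * exp x * (1 + x) ^ (-(ν + 1 / 2))) := by
  obtain ⟨a, rfl⟩ : ∃ a, ν = a - 1 := ⟨ν + 1, by ring⟩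
  have ha : 0 < a := by linarith
  rw [show -(a - 1 + 1 / 2) = 1 / 2 - a by ring]
  obtain ⟨c, C, hc, hC, hG⟩ := Gamma_half_div_Gamma_bounds ha
  obtain ⟨d, D, hd, hD, hS⟩ := tsum_cosh_terms_mul_rpow_bounds (1 / 2 - a)
  have hpi : 0 < √π := sqrt_pos.2 pi_pos
  refine ⟨c * d / (2 ^ (a - 1) * √π), C * D / (2 ^ (a - 1) * √π), by positivity, by positivity,
    fun x hx => ?_⟩
  obtain ⟨hs, hlow, hup⟩ := hS x hx.le
  have hle1 (k : ℕ) : c * (x ^ (2 * k) / (2 * k).factorial * ((k : ℝ) + 1) ^ (1 / 2 - a)) ≤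
      x ^ (2 * k) / (2 * k).factorial * (Gamma (k + 1 / 2) / Gamma (k + a)) := by
    rw [mul_left_comm]
    exact mul_le_mul_of_nonneg_left (hG k).1 (by positivity)
  have hle2 (k : ℕ) : x ^ (2 * k) / (2 * k).factorial * (Gamma (k + 1 / 2) / Gamma (k + a)) ≤
      C * (x ^ (2 * k) / (2 * k).factorial * ((k : ℝ) + 1) ^ (1 / 2 - a)) := by
    rw [mul_left_comm C]
    exact mul_le_mul_of_nonneg_left (hG k).2 (by positivity)
  have hsum := Summable.of_nonneg_of_le (fun k => le_trans (by positivity) (hle1 k)) hle2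
    (hs.mul_left C)
  have hI : besselI (a - 1) x = x ^ (a - 1) / (2 ^ (a - 1) * √π) *
      ∑' k : ℕ, x ^ (2 * k) / (2 * k).factorial * (Gamma (k + 1 / 2) / Gamma (k + a)) := by
    simp only [besselI, besselI_term_eq hx, tsum_mul_left]
    rw [div_rpow hx.le two_pos.le, div_div]
  have hT1 := (hs.mul_left c).tsum_le_tsum hle1 hsum
  have hT2 := hsum.tsum_le_tsum hle2 (hs.mul_left C)
  rw [tsum_mul_left] at hT1 hT2
  have hl := (mul_le_mul_of_nonneg_left hlow hc.le).trans hT1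
  have hu := hT2.trans (mul_le_mul_of_nonneg_left hup hC.le)
  have hpre : 0 ≤ x ^ (a - 1) / (2 ^ (a - 1) * √π) := by positivity
  rw [hI]
  constructor
  · refine le_trans (le_of_eq ?_) (mul_le_mul_of_nonneg_left hl hpre)
    ring
  · refine (mul_le_mul_of_nonneg_left hu hpre).trans (le_of_eq ?_)
    ring

theorem besselHeat_prefactor_eq {ζ r s t : ℝ} (hr : 0 < r) (hs : 0 < s) (ht : 0 < t) :
    (r * s) ^ ((1 : ℝ) / 2 - ζ) / (2 * t) * exp (-(r ^ 2 + s ^ 2) / (4 * t)) *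
      ((r * s / (2 * t)) ^ (ζ - 1 / 2) * exp (r * s / (2 * t)) *
        (1 + r * s / (2 * t)) ^ (-ζ)) =
      2 ^ (-(1 : ℝ) / 2) *
        (t ^ (-(1 : ℝ) / 2) * exp (-(r - s) ^ 2 / (4 * t)) * (r * s + 2 * t) ^ (-ζ)) := by
  have hrs : 0 < r * s := by positivity
  have h2t : 0 < 2 * t := by positivity
  have hexp : exp (-(r - s) ^ 2 / (4 * t)) =
      exp (-(r ^ 2 + s ^ 2) / (4 * t)) * exp (r * s / (2 * t)) := by
    rw [← exp_add]
    congr 1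
    field_simp
    ring
  have hbase : 1 + r * s / (2 * t) = (r * s + 2 * t) / (2 * t) := by
    field_simp
    ring
  have hpow : (2 : ℝ) ^ (-(1 : ℝ) / 2) * t ^ (-(1 : ℝ) / 2) =
      (2 * t)⁻¹ * ((2 * t) ^ (ζ - 1 / 2))⁻¹ * ((2 * t) ^ (-ζ))⁻¹ := by
    rw [← mul_rpow two_pos.le ht.le, ← rpow_neg h2t.le, ← rpow_neg h2t.le, ← rpow_neg_one,
      ← rpow_add h2t, ← rpow_add h2t]
    congr 1
    ring
  have hrs' : (r * s) ^ ((1 : ℝ) / 2 - ζ) * (r * s) ^ (ζ - 1 / 2) = 1 := by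
    rw [← rpow_add hrs]
    simp
  rw [hexp, hbase, div_rpow hrs.le h2t.le, div_rpow (by positivity) h2t.le]
  calc _ = ((r * s) ^ ((1 : ℝ) / 2 - ζ) * (r * s) ^ (ζ - 1 / 2)) *
        ((2 * t)⁻¹ * ((2 * t) ^ (ζ - 1 / 2))⁻¹ * ((2 * t) ^ (-ζ))⁻¹) *
        (exp (-(r ^ 2 + s ^ 2) / (4 * t)) * exp (r * s / (2 * t))) *
        (r * s + 2 * t) ^ (-ζ) := by
          simp only [div_eq_mul_inv]
          ring
    _ = _ := by
          rw [hrs', ← hpow]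
          ring

theorem rpow_le_two_rpow_abs_mul_rpow {x y p : ℝ} (hx : 0 < x) (hy : 0 < y) (hxy : x ≤ 2 * y)
    (hyx : y ≤ 2 * x) : x ^ p ≤ 2 ^ |p| * y ^ p := by
  rcases le_total 0 p with hp | hp
  · rw [abs_of_nonneg hp, ← mul_rpow two_pos.le hy.le]
    exact rpow_le_rpow hx.le hxy hp
  · rw [abs_of_nonpos hp, rpow_neg two_pos.le, ← inv_rpow two_pos.le,
      ← mul_rpow (by positivity) hy.le]
    exact rpow_le_rpow_of_nonpos (by positivity) (by linarith) hp

theorem stmt0 (ζ : ℝ) (hζ : -1/2 < ζ) :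
    ∃ c₁ c₂ c₃ c₄ : ℝ, 0 < c₁ ∧ 0 < c₂ ∧ 0 < c₃ ∧ 0 < c₄ ∧
      ∀ r s t : ℝ, 0 < r → 0 < s → 0 < t →
        c₁ * t ^ (-(1 : ℝ) / 2) * Real.exp (-(r - s) ^ 2 / (c₂ * t)) * (r * s + t) ^ (-ζ)
            ≤ besselHeat ζ t r s ∧
          besselHeat ζ t r s
            ≤ c₃ * t ^ (-(1 : ℝ) / 2) * Real.exp (-(r - s) ^ 2 / (c₄ * t)) * (r * s + t) ^ (-ζ) := by
  obtain ⟨c, C, hc, hC, h⟩ := besselI_bounds (ν := ζ - 1 / 2) (by linarith)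
  rw [show -(ζ - 1 / 2 + 1 / 2) = -ζ by ring] at h
  set K : ℝ := 2 ^ |-ζ| with hK
  set q : ℝ := 2 ^ (-(1 : ℝ) / 2) with hq
  have hKpos : 0 < K := by positivity
  have hqpos : 0 < q := by positivity
  refine ⟨c * q / K, 4, C * q * K, 4, by positivity, by norm_num, by positivity, by norm_num,
    fun r s t hr hs ht => ?_⟩
  have hrs : 0 < r * s := by positivity
  have hpre := besselHeat_prefactor_eq (ζ := ζ) hr hs ht
  rw [← hq] at hpre
  obtain ⟨hl, hu⟩ := h (r * s / (2 * t)) (by positivity)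
  have hP : 0 ≤ (r * s) ^ ((1 : ℝ) / 2 - ζ) / (2 * t) * exp (-(r ^ 2 + s ^ 2) / (4 * t)) := by
    positivity
  have hl' := mul_le_mul_of_nonneg_left hl hP
  have hu' := mul_le_mul_of_nonneg_left hu hP
  rw [mul_left_comm, hpre] at hl'
  rw [mul_left_comm _ C, hpre] at hu'
  have h1 : (r * s + t) ^ (-ζ) ≤ K * (r * s + 2 * t) ^ (-ζ) :=
    rpow_le_two_rpow_abs_mul_rpow (by positivity) (by positivity) (by linarith) (by linarith)
  have h2 : (r * s + 2 * t) ^ (-ζ) ≤ K * (r * s + t) ^ (-ζ) :=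
    rpow_le_two_rpow_abs_mul_rpow (by positivity) (by positivity) (by linarith) (by linarith)
  set E := t ^ (-(1 : ℝ) / 2) * exp (-(r - s) ^ 2 / (4 * t)) with hE
  have hEpos : 0 < E := by positivity
  constructor
  · refine le_trans ?_ hl'
    calc _ = c * q / K * E * (r * s + t) ^ (-ζ) := by rw [hE]; ring
      _ ≤ c * q / K * E * (K * (r * s + 2 * t) ^ (-ζ)) := by gcongr
      _ = _ := by field_simp
  · refine hu'.trans ?_
    calc _ = C * q * E * (r * s + 2 * t) ^ (-ζ) := by ring
      _ ≤ C * q * E * (K * (r * s + t) ^ (-ζ)) := by gcongr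
      _ = _ := by rw [hE]; ring
end

section
/- Let ζ ∈ (-1/2, ∞) and α ∈ (0,2). Then there exist constants c, C > 0 (depending only on ζ and α) such that for all r, s, t > 0: c · t / (|r-s|^{1+α}(r+s)^{2ζ} + t^{(1+α)/α}(t^{1/α} + r + s)^{2ζ}) ≤ p_ζ^{(α)}(t,r,s) ≤ C · t / (|r-s|^{1+α}(r+s)^{2ζ} + t^{(1+α)/α}(t^{1/α} + r + s)^{2ζ}). -/
open MeasureTheory Real Set Filter

/-- `σ` is a family of `α/2`-stable subordinator densities. -/
def IsStableSubordinatorDensity (α : ℝ) (σ : ℝ → ℝ → ℝ) : Prop :=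
  (∀ t, 0 < t → ∀ τ, 0 < τ → 0 ≤ σ t τ) ∧
  (∀ t, 0 < t → Measurable (σ t)) ∧
  (∀ t l : ℝ, 0 < t → 0 ≤ l →
    (∫ τ in Ioi (0 : ℝ), Real.exp (-τ * l) * σ t τ) = Real.exp (-t * l ^ (α / 2)))

/-- The `α/2`-subordinated Bessel heat kernel `p_ζ^{(α)}(t,r,s)`. -/
noncomputable def subKernel (ζ : ℝ) (σ : ℝ → ℝ → ℝ) (t r s : ℝ) : ℝ :=
  ∫ τ in Ioi (0 : ℝ), besselHeat ζ τ r s * σ t τ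

lemma exists_one_add_rpow_le_exp (q : ℝ) {δ : ℝ} (hδ : 0 < δ) :
    ∃ C, 0 < C ∧ ∀ v : ℝ, 0 ≤ v → (1 + v) ^ q ≤ C * exp (δ * v) := by
  have hp : 0 < |q| + 1 := by positivity
  set M := max 1 ((|q| + 1) / δ) with hM
  have hM1 : 1 ≤ M := le_max_left _ _
  have hM2 : (|q| + 1) / δ ≤ M := le_max_right _ _
  refine ⟨M ^ |q|, by positivity, fun v hv => ?_⟩
  have h1 : 1 + v ≤ M * exp (δ * v / (|q| + 1)) := by
    have h2 := add_one_le_exp (δ * v / (|q| + 1))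
    have h3 : v ≤ M * (δ * v / (|q| + 1)) := by
      calc v = (|q| + 1) / δ * (δ * v / (|q| + 1)) := by field_simp
        _ ≤ _ := by gcongr
    nlinarith
  calc (1 + v) ^ q ≤ (1 + v) ^ |q| := rpow_le_rpow_of_exponent_le (by linarith) (le_abs_self q)
    _ ≤ (M * exp (δ * v / (|q| + 1))) ^ |q| := by gcongr
    _ = M ^ |q| * exp (δ * v / (|q| + 1) * |q|) := by
      rw [mul_rpow (by positivity) (by positivity), ← exp_mul]
    _ ≤ M ^ |q| * exp (δ * v) := by
      refine mul_le_mul_of_nonneg_left (exp_le_exp.2 ?_) (by positivity)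
      rw [div_mul_eq_mul_div, div_le_iff₀ hp]
      nlinarith [mul_nonneg hδ.le hv]

lemma rpow_le_rpow_add_rpow {l x u : ℝ} (hl : 0 < l) (hlx : l ≤ x) (hxu : x ≤ u) (q : ℝ) :
    x ^ q ≤ l ^ q + u ^ q := by
  have hx : 0 < x := by linarith
  have hu : 0 < u := by linarith
  rcases le_total 0 q with hq | hq
  · have := rpow_le_rpow hx.le hxu hq
    have := rpow_pos_of_pos hl q
    linarith
  · have := rpow_le_rpow_of_nonpos hl hlx hq
    have := rpow_pos_of_pos hu q
    linarith

lemma cosh_le_exp_self {x : ℝ} (hx : 0 ≤ x) : cosh x ≤ exp x := by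
  rw [cosh_eq]
  have : exp (-x) ≤ exp x := exp_le_exp.2 (by linarith)
  linarith

lemma exp_le_two_mul_cosh (x : ℝ) : exp x ≤ 2 * cosh x := by
  rw [cosh_eq]
  have := exp_pos (-x)
  linarith

lemma hasSum_cosh_weight_mul_exp (x d : ℝ) :
    HasSum (fun k : ℕ => x ^ (2 * k) / (Nat.factorial (2 * k) : ℝ) * exp (2 * d * k))
      (cosh (x * exp d)) := by
  convert! Real.hasSum_cosh (x * exp d) using 2 with k
  rw [mul_pow, ← exp_nat_mul]
  push_cast
  rw [show 2 * d * (k : ℝ) = 2 * k * d by ring]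
  ring

lemma exists_cosh_weight_moment_le_of_nonneg {q : ℝ} (hq : 0 ≤ q) :
    ∃ C, 0 < C ∧ ∀ x : ℝ, 0 ≤ x →
      Summable (fun k : ℕ => x ^ (2 * k) / (Nat.factorial (2 * k) : ℝ) *
        (((k : ℝ) + 1) / (1 + x)) ^ q) ∧
      ∑' k : ℕ, x ^ (2 * k) / (Nat.factorial (2 * k) : ℝ) * (((k : ℝ) + 1) / (1 + x)) ^ q
        ≤ C * exp x := by
  obtain ⟨C, hC, hCe⟩ := exists_one_add_rpow_le_exp q one_pos
  refine ⟨C * exp 2, by positivity, fun x hx => ?_⟩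
  have hs := (hasSum_cosh_weight_mul_exp x (1 / (2 * (1 + x)))).mul_left (C * exp (1 / (1 + x)))
  have hle : ∀ k : ℕ, x ^ (2 * k) / (Nat.factorial (2 * k) : ℝ) * (((k : ℝ) + 1) / (1 + x)) ^ q ≤
      C * exp (1 / (1 + x)) * (x ^ (2 * k) / (Nat.factorial (2 * k) : ℝ) *
        exp (2 * (1 / (2 * (1 + x))) * k)) := fun k => by
    have hy : 0 ≤ ((k : ℝ) + 1) / (1 + x) := by positivity
    have h1 : (((k : ℝ) + 1) / (1 + x)) ^ q ≤ C * exp (((k : ℝ) + 1) / (1 + x)) := by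
      refine (rpow_le_rpow hy (by linarith) hq).trans ((hCe _ hy).trans_eq (by rw [one_mul]))
    calc _ ≤ x ^ (2 * k) / (Nat.factorial (2 * k) : ℝ) * (C * exp (((k : ℝ) + 1) / (1 + x))) := by
          gcongr
      _ = _ := by
          rw [show ((k : ℝ) + 1) / (1 + x) = 1 / (1 + x) + 2 * (1 / (2 * (1 + x))) * k by
            field_simp; ring, exp_add]
          ring
  have hsum := hs.summable.of_nonneg_of_le (fun k => by positivity) hle
  refine ⟨hsum, ?_⟩
  have h2 : x * exp (1 / (2 * (1 + x))) ≤ x + 1 := by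
    have hd0 : 0 ≤ 1 / (2 * (1 + x)) := by positivity
    have hd1 : 1 / (2 * (1 + x)) ≤ 1 / 2 := by
      rw [div_le_div_iff₀ (by positivity) (by positivity)]; linarith
    have h3 : exp (1 / (2 * (1 + x))) ≤ 1 + 2 * (1 / (2 * (1 + x))) := by
      have h4 := add_one_le_exp (-(1 / (2 * (1 + x))))
      rw [exp_neg] at h4
      set d := 1 / (2 * (1 + x))
      have h5 : 0 < exp d := exp_pos d
      have h6 : (1 - d) * exp d ≤ 1 := by
        calc (1 - d) * exp d ≤ (exp d)⁻¹ * exp d := by gcongr; linarith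
          _ = 1 := inv_mul_cancel₀ h5.ne'
      nlinarith
    calc x * exp (1 / (2 * (1 + x))) ≤ x * (1 + 2 * (1 / (2 * (1 + x)))) := by gcongr
      _ = x + x / (1 + x) := by field_simp
      _ ≤ x + 1 := by gcongr; rw [div_le_one (by linarith)]; linarith
  calc _ ≤ C * exp (1 / (1 + x)) * cosh (x * exp (1 / (2 * (1 + x)))) :=
        (hsum.tsum_le_tsum hle hs.summable).trans_eq hs.tsum_eq
    _ ≤ C * exp 1 * exp (x + 1) := by
        have h7 : 1 / (1 + x) ≤ 1 := by rw [div_le_one (by linarith)]; linarith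
        have h8 := (cosh_le_exp_self (by positivity : 0 ≤ x * exp (1 / (2 * (1 + x))))).trans
          (exp_le_exp.2 h2)
        gcongr
    _ = C * exp 2 * exp x := by
        rw [mul_assoc, mul_assoc, ← exp_add, ← exp_add]; ring_nf

lemma exists_cosh_weight_moment_le_of_nonpos {q : ℝ} (hq : 0 ≤ q) :
    ∃ C, 0 < C ∧ ∀ x : ℝ, 0 ≤ x →
      Summable (fun k : ℕ => x ^ (2 * k) / (Nat.factorial (2 * k) : ℝ) *
        (((k : ℝ) + 1) / (1 + x)) ^ (-q)) ∧
      ∑' k : ℕ, x ^ (2 * k) / (Nat.factorial (2 * k) : ℝ) * (((k : ℝ) + 1) / (1 + x)) ^ (-q)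
        ≤ C * exp x := by
  obtain ⟨C, hC, hCe⟩ := exists_one_add_rpow_le_exp q (show (0 : ℝ) < 1 / 4 by norm_num)
  refine ⟨8 ^ q + C * exp (1 / 4), by positivity, fun x hx => ?_⟩
  have hs := ((Real.hasSum_cosh x).mul_left (8 ^ q)).add
    ((hasSum_cosh_weight_mul_exp x (-1)).mul_left ((1 + x) ^ q * exp ((1 + x) / 4)))
  have hle : ∀ k : ℕ, x ^ (2 * k) / (Nat.factorial (2 * k) : ℝ) *
      (((k : ℝ) + 1) / (1 + x)) ^ (-q) ≤ 8 ^ q * (x ^ (2 * k) / (Nat.factorial (2 * k) : ℝ)) +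
      (1 + x) ^ q * exp ((1 + x) / 4) * (x ^ (2 * k) / (Nat.factorial (2 * k) : ℝ) *
        exp (2 * (-1) * k)) := fun k => by
    have hy : 0 ≤ (1 + x) / ((k : ℝ) + 1) := by positivity
    have h1 : (((k : ℝ) + 1) / (1 + x)) ^ (-q) ≤
        8 ^ q + (1 + x) ^ q * exp ((1 + x) / 4) * exp (2 * (-1) * k) := by
      rw [rpow_neg (by positivity), ← inv_rpow (by positivity), inv_div]
      rcases le_total ((1 + x) / ((k : ℝ) + 1)) 8 with h | h
      · have := rpow_le_rpow hy h hq
        have : 0 ≤ (1 + x) ^ q * exp ((1 + x) / 4) * exp (2 * (-1) * k) := by positivity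
        linarith
      · rw [le_div_iff₀ (by positivity)] at h
        have h2 : (1 + x) / ((k : ℝ) + 1) ≤ 1 + x :=
          div_le_self (by linarith) (by linarith [(Nat.cast_nonneg k : (0 : ℝ) ≤ k)])
        have h3 := rpow_le_rpow hy h2 hq
        have h4 : 1 ≤ exp ((1 + x) / 4) * exp (2 * (-1) * k) := by
          rw [← exp_add]; exact one_le_exp (by linarith)
        have h5 : (1 + x) ^ q * 1 ≤ (1 + x) ^ q * (exp ((1 + x) / 4) * exp (2 * (-1) * k)) := by
          gcongr
        have : (0 : ℝ) < 8 ^ q := by positivity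
        linarith
    calc _ ≤ x ^ (2 * k) / (Nat.factorial (2 * k) : ℝ) *
          (8 ^ q + (1 + x) ^ q * exp ((1 + x) / 4) * exp (2 * (-1) * k)) := by gcongr
      _ = _ := by ring
  have hsum := hs.summable.of_nonneg_of_le (fun k => by positivity) hle
  refine ⟨hsum, ((hsum.tsum_le_tsum hle hs.summable).trans_eq hs.tsum_eq).trans ?_⟩
  rw [add_mul]
  have h0 : exp (-1) ≤ 1 / 2 := by
    rw [exp_neg, inv_le_comm₀ (exp_pos _) (by norm_num)]
    linarith [add_one_le_exp (1 : ℝ)]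
  have h1 : cosh (x * exp (-1)) ≤ exp (x / 2) :=
    (cosh_le_exp_self (by positivity)).trans (exp_le_exp.2 (by nlinarith))
  have h2 := hCe x hx
  refine add_le_add ?_ ?_
  · gcongr
    exact cosh_le_exp_self hx
  · calc (1 + x) ^ q * exp ((1 + x) / 4) * cosh (x * exp (-1))
        ≤ C * exp (1 / 4 * x) * exp ((1 + x) / 4) * exp (x / 2) := by
          gcongr
      _ = C * exp (1 / 4) * exp x := by
          rw [mul_assoc, mul_assoc, ← exp_add, ← exp_add, mul_assoc, ← exp_add]; ring_nf

lemma exists_cosh_weight_moment_le (q : ℝ) :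
    ∃ C, 0 < C ∧ ∀ x : ℝ, 0 ≤ x →
      Summable (fun k : ℕ => x ^ (2 * k) / (Nat.factorial (2 * k) : ℝ) *
        (((k : ℝ) + 1) / (1 + x)) ^ q) ∧
      ∑' k : ℕ, x ^ (2 * k) / (Nat.factorial (2 * k) : ℝ) * (((k : ℝ) + 1) / (1 + x)) ^ q
        ≤ C * exp x := by
  rcases le_total 0 q with hq | hq
  · exact exists_cosh_weight_moment_le_of_nonneg hq
  · simpa using exists_cosh_weight_moment_le_of_nonpos (neg_nonneg.2 hq)

lemma exists_le_cosh_weight_moment (q : ℝ) :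
    ∃ c, 0 < c ∧ ∀ x : ℝ, 0 ≤ x → c * exp x ≤
      ∑' k : ℕ, x ^ (2 * k) / (Nat.factorial (2 * k) : ℝ) * (((k : ℝ) + 1) / (1 + x)) ^ q := by
  obtain ⟨A, -, hAs⟩ := exists_cosh_weight_moment_le q
  obtain ⟨B, hB, hBs⟩ := exists_cosh_weight_moment_le (-q)
  refine ⟨1 / (8 * B), by positivity, fun x hx => ?_⟩
  obtain ⟨hs, -⟩ := hAs x hx
  obtain ⟨hs', hB'⟩ := hBs x hx
  have hle : ∀ k : ℕ, x ^ (2 * k) / (Nat.factorial (2 * k) : ℝ) ≤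
      2 * B * (x ^ (2 * k) / (Nat.factorial (2 * k) : ℝ) * (((k : ℝ) + 1) / (1 + x)) ^ q) +
      1 / (4 * B) * (x ^ (2 * k) / (Nat.factorial (2 * k) : ℝ) *
        (((k : ℝ) + 1) / (1 + x)) ^ (-q)) := fun k => by
    have hy : 0 < (((k : ℝ) + 1) / (1 + x)) ^ q := by positivity
    rw [rpow_neg (by positivity)]
    set z := (((k : ℝ) + 1) / (1 + x)) ^ q
    have h1 : 1 ≤ 2 * B * z + 1 / (4 * B) * z⁻¹ := by
      have : 2 * B * z + 1 / (4 * B) * z⁻¹ - 1 = ((2 * B * z) ^ 2 + (2 * B * z - 1) ^ 2) / (4 * B * z) := by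
        field_simp; ring
      have : 0 ≤ ((2 * B * z) ^ 2 + (2 * B * z - 1) ^ 2) / (4 * B * z) := by positivity
      linarith
    calc _ = x ^ (2 * k) / (Nat.factorial (2 * k) : ℝ) * 1 := by ring
      _ ≤ x ^ (2 * k) / (Nat.factorial (2 * k) : ℝ) * (2 * B * z + 1 / (4 * B) * z⁻¹) := by gcongr
      _ = _ := by ring
  have h := (Real.hasSum_cosh x).summable.tsum_le_tsum hle ((hs.mul_left _).add (hs'.mul_left _))
  rw [(hs.mul_left _).tsum_add (hs'.mul_left _), tsum_mul_left, tsum_mul_left,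
    ← cosh_eq_tsum] at h
  have h2 : 1 / (4 * B) * ∑' k : ℕ, x ^ (2 * k) / (Nat.factorial (2 * k) : ℝ) *
        (((k : ℝ) + 1) / (1 + x)) ^ (-q) ≤ exp x / 4 := by
    calc _ ≤ 1 / (4 * B) * (B * exp x) := by gcongr
      _ = _ := by field_simp
  have h3 := exp_le_two_mul_cosh x
  rw [div_mul_eq_mul_div, div_le_iff₀ (by positivity)]
  linarith

lemma exists_bounds_of_tendsto_one {b : ℕ → ℝ} (hb : ∀ n, 0 < b n)
    (h : Tendsto b atTop (nhds 1)) : ∃ c C, 0 < c ∧ 0 < C ∧ ∀ n, c ≤ b n ∧ b n ≤ C := by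
  obtain ⟨C, hC⟩ := h.bddAbove_range
  obtain ⟨D, hD⟩ := (h.inv₀ one_ne_zero).bddAbove_range
  have hC' : ∀ n, b n ≤ C := fun n => hC ⟨n, rfl⟩
  have hD' : ∀ n, (b n)⁻¹ ≤ D := fun n => hD ⟨n, rfl⟩
  have hC0 : 0 < C := (hb 0).trans_le (hC' 0)
  have hD0 : 0 < D := (inv_pos.2 (hb 0)).trans_le (hD' 0)
  exact ⟨D⁻¹, C, inv_pos.2 hD0, hC0, fun n => ⟨inv_le_of_inv_le₀ (hb n) (hD' n), hC' n⟩⟩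

lemma prod_range_add_eq_Gamma_div {s : ℝ} (hs : 0 < s) (n : ℕ) :
    ∏ j ∈ Finset.range n, (s + j) = Gamma (s + n) / Gamma s := by
  induction n with
  | zero => simp [(Gamma_pos_of_pos hs).ne']
  | succ n ih =>
    rw [Finset.prod_range_succ, ih]
    push_cast
    rw [← add_assoc, Gamma_add_one (by positivity)]
    ring

lemma exists_Gamma_bounds {s : ℝ} (hs : 0 < s) :
    ∃ c C, 0 < c ∧ 0 < C ∧ ∀ k : ℕ,
      c * (((k : ℝ) + 1) ^ (s - 1) * (Nat.factorial k : ℝ)) ≤ Gamma (k + s) ∧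
      Gamma (k + s) ≤ C * (((k : ℝ) + 1) ^ (s - 1) * (Nat.factorial k : ℝ)) := by
  have hG : ∀ k : ℕ, 0 < Gamma (k + s) := fun k => Gamma_pos_of_pos (by positivity)
  obtain ⟨c, C, hc, hC, h⟩ := exists_bounds_of_tendsto_one
    (b := fun k : ℕ => Gamma (k + s) / (((k : ℝ) + 1) ^ (s - 1) * (Nat.factorial k : ℝ)))
    (fun k => div_pos (hG k) (by positivity)) (by
      have h1 := (tendsto_const_nhds (x := Gamma s)).div (Real.GammaSeq_tendsto_Gamma s)
        (Gamma_pos_of_pos hs).ne'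
      rw [div_self (Gamma_pos_of_pos hs).ne'] at h1
      have h2 := ((tendsto_natCast_div_add_atTop (1 : ℝ)).rpow_const
        (p := s - 1) (Or.inl one_ne_zero)).mul (tendsto_natCast_div_add_atTop s)
      rw [one_rpow, one_mul] at h2
      have h3 := h1.mul h2
      rw [one_mul] at h3
      refine h3.congr' ?_
      filter_upwards [eventually_gt_atTop 0] with n hn
      have hn' : (0 : ℝ) < n := by exact_mod_cast hn
      have hp := prod_range_add_eq_Gamma_div hs (n + 1)
      push_cast at hp
      rw [← add_assoc, Gamma_add_one (by positivity), add_comm s] at hp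
      have hG0 := hG n
      have hs0 := Gamma_pos_of_pos hs
      simp only [Pi.div_apply, Real.GammaSeq]
      rw [hp, div_rpow (by positivity) (by positivity), rpow_sub_one hn'.ne']
      have : (0 : ℝ) < (n : ℝ) ^ s := by positivity
      have : (0 : ℝ) < ((n : ℝ) + 1) ^ (s - 1) := by positivity
      field_simp)
  refine ⟨c, C, hc, hC, fun k => ?_⟩
  have h0 : (0 : ℝ) < ((k : ℝ) + 1) ^ (s - 1) * (Nat.factorial k : ℝ) := by positivity
  exact ⟨(le_div_iff₀ h0).1 (h k).1, (div_le_iff₀ h0).1 (h k).2⟩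

lemma factorial_two_mul_eq (k : ℕ) :
    (Nat.factorial (2 * k) : ℝ) = 4 ^ k * Nat.factorial k * Gamma (k + 1 / 2) / √π := by
  have h := Real.Gamma_mul_Gamma_add_half ((k : ℝ) + 1 / 2)
  rw [show (k : ℝ) + 1 / 2 + 1 / 2 = k + 1 by ring, Gamma_nat_eq_factorial,
    show 2 * ((k : ℝ) + 1 / 2) = ((2 * k : ℕ) : ℝ) + 1 by push_cast; ring,
    Gamma_nat_eq_factorial, show 1 - (((2 * k : ℕ) : ℝ) + 1) = -((2 * k : ℕ) : ℝ) by ring,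
    rpow_neg (by norm_num), rpow_natCast, pow_mul] at h
  norm_num at h
  have : 0 < √π := by positivity
  rw [show (k : ℝ) + 1 / 2 = k + 2⁻¹ by norm_num] at *
  field_simp
  field_simp at h
  linarith

/-- The power series of `(x / 2) ^ (-ν) * I_ν(x)` with `ν = ζ - 1 / 2`. -/
noncomputable def besselSeries (ζ x : ℝ) : ℝ :=
  ∑' k : ℕ, (x / 2) ^ (2 * k) / ((Nat.factorial k : ℝ) * Gamma ((k : ℝ) + (ζ + 1 / 2)))

lemma exists_besselSeries_bounds {ζ : ℝ} (hζ : -1 / 2 < ζ) :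
    ∃ c C, 0 < c ∧ 0 < C ∧ ∀ x : ℝ, 0 ≤ x →
      c * (exp x * (1 + x) ^ (-ζ)) ≤ besselSeries ζ x ∧
      besselSeries ζ x ≤ C * (exp x * (1 + x) ^ (-ζ)) := by
  obtain ⟨a, A, ha, hA, hG⟩ := exists_Gamma_bounds (show 0 < ζ + 1 / 2 by linarith)
  obtain ⟨b, B, hb, hB, hH⟩ := exists_Gamma_bounds (show (0 : ℝ) < 1 / 2 by norm_num)
  obtain ⟨M, hM, hMs⟩ := exists_cosh_weight_moment_le (-ζ)
  obtain ⟨m, hm, hms⟩ := exists_le_cosh_weight_moment (-ζ)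
  have hπ : 0 < √π := by positivity
  refine ⟨b / (A * √π) * m, B / (a * √π) * M, by positivity, by positivity, fun x hx => ?_⟩
  obtain ⟨hsum, hle⟩ := hMs x hx
  have hge := hms x hx
  have hx1 : 0 < (1 + x) ^ (-ζ) := by positivity
  set w : ℕ → ℝ := fun k => x ^ (2 * k) / (Nat.factorial (2 * k) : ℝ) *
        (((k : ℝ) + 1) / (1 + x)) ^ (-ζ) with hw
  have key : ∀ k : ℕ, b / (A * √π) * (1 + x) ^ (-ζ) * w k ≤
      (x / 2) ^ (2 * k) / ((Nat.factorial k : ℝ) * Gamma ((k : ℝ) + (ζ + 1 / 2))) ∧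
      (x / 2) ^ (2 * k) / ((Nat.factorial k : ℝ) * Gamma ((k : ℝ) + (ζ + 1 / 2))) ≤
      B / (a * √π) * (1 + x) ^ (-ζ) * w k := fun k => by
    obtain ⟨h1, h2⟩ := hG k
    obtain ⟨h3, h4⟩ := hH k
    have hk : (0 : ℝ) < k + 1 := by positivity
    have e1 : ((k : ℝ) + 1) ^ (ζ + 1 / 2 - 1) = (k + 1) ^ ζ * (k + 1) ^ (1 / 2 - 1 : ℝ) := by
      rw [← rpow_add hk]; ring_nf
    rw [e1] at h1 h2
    set G := Gamma ((k : ℝ) + (ζ + 1 / 2))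
    set H := Gamma ((k : ℝ) + 1 / 2)
    set p := ((k : ℝ) + 1) ^ (1 / 2 - 1 : ℝ) with hp
    have hp0 : 0 < p := by positivity
    have hf : (0 : ℝ) < Nat.factorial k := by positivity
    have hz : 0 < ((k : ℝ) + 1) ^ ζ := by positivity
    have hG0 : 0 < G := Gamma_pos_of_pos (by linarith [(Nat.cast_nonneg k : (0 : ℝ) ≤ k)])
    have hH0 : 0 < H := Gamma_pos_of_pos (by positivity)
    have e2 : (x / 2) ^ (2 * k) / ((Nat.factorial k : ℝ) * G) =
        (1 + x) ^ (-ζ) * w k * (H * (k + 1) ^ ζ / (√π * G)) := by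
      simp only [hw]
      rw [factorial_two_mul_eq, div_rpow hk.le (by linarith), rpow_neg hk.le, div_pow, pow_mul 2]
      rw [show (2 : ℝ) ^ 2 = 4 by norm_num, show Gamma ((k : ℝ) + 1 / 2) = H from rfl]
      field_simp
    have hwk : 0 ≤ (1 + x) ^ (-ζ) * w k := by positivity
    rw [e2]
    constructor
    · rw [mul_assoc, mul_comm]
      refine mul_le_mul_of_nonneg_left ?_ hwk
      rw [div_le_div_iff₀ (by positivity) (by positivity)]
      calc b * (√π * G) ≤ b * (√π * (A * ((k + 1) ^ ζ * p * (Nat.factorial k : ℝ)))) := by gcongr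
        _ = (b * (p * (Nat.factorial k : ℝ))) * (k + 1) ^ ζ * (A * √π) := by ring
        _ ≤ _ := by gcongr
    · rw [mul_assoc (B / _), mul_comm (B / _)]
      refine mul_le_mul_of_nonneg_left ?_ hwk
      rw [div_le_div_iff₀ (by positivity) (by positivity)]
      calc H * (k + 1) ^ ζ * (a * √π) ≤ (B * (p * (Nat.factorial k : ℝ))) * (k + 1) ^ ζ * (a * √π) := by
            gcongr
        _ = B * (√π * (a * ((k + 1) ^ ζ * p * (Nat.factorial k : ℝ)))) := by ring
        _ ≤ _ := by gcongr
  have hsb : Summable (fun k : ℕ =>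
      (x / 2) ^ (2 * k) / ((Nat.factorial k : ℝ) * Gamma ((k : ℝ) + (ζ + 1 / 2)))) :=
    (hsum.mul_left (B / (a * √π) * (1 + x) ^ (-ζ))).of_nonneg_of_le
      (fun k => (by positivity : 0 ≤ b / (A * √π) * (1 + x) ^ (-ζ) * w k).trans (key k).1)
      (fun k => (key k).2)
  constructor
  · have := (hsum.mul_left (b / (A * √π) * (1 + x) ^ (-ζ))).tsum_le_tsum (fun k => (key k).1) hsb
    rw [tsum_mul_left] at this
    refine le_trans ?_ this
    calc _ = b / (A * √π) * (1 + x) ^ (-ζ) * (m * exp x) := by ring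
      _ ≤ _ := by gcongr
  · have := hsb.tsum_le_tsum (fun k => (key k).2) (hsum.mul_left (B / (a * √π) * (1 + x) ^ (-ζ)))
    rw [tsum_mul_left] at this
    refine this.trans ?_
    calc _ ≤ B / (a * √π) * (1 + x) ^ (-ζ) * (M * exp x) := by gcongr
      _ = _ := by ring

lemma measurable_besselSeries (ζ : ℝ) : Measurable (besselSeries ζ) :=
  Measurable.tsum fun k => by fun_prop
lemma besselHeat_eq_besselSeries (ζ : ℝ) {τ r s : ℝ} (hτ : 0 < τ) (hr : 0 < r) (hs : 0 < s) :
    besselHeat ζ τ r s = (4 * τ) ^ (1 / 2 - ζ) / (2 * τ) * exp (-(r ^ 2 + s ^ 2) / (4 * τ)) *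
      besselSeries ζ (r * s / (2 * τ)) := by
  have hx : 0 < r * s / (2 * τ) / 2 := by positivity
  have h1 : besselI (ζ - 1 / 2) (r * s / (2 * τ)) =
      (r * s / (2 * τ) / 2) ^ (ζ - 1 / 2) * besselSeries ζ (r * s / (2 * τ)) := by
    rw [besselI, besselSeries, ← tsum_mul_left]
    refine tsum_congr fun k => ?_
    rw [rpow_add hx, show (2 : ℝ) * k = ((2 * k : ℕ) : ℝ) by push_cast; ring, rpow_natCast,
      show (k : ℝ) + (ζ - 1 / 2) + 1 = k + (ζ + 1 / 2) by ring]
    ring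
  have h2 : (r * s) ^ (1 / 2 - ζ) * (r * s / (2 * τ) / 2) ^ (ζ - 1 / 2) = (4 * τ) ^ (1 / 2 - ζ) := by
    rw [show r * s / (2 * τ) / 2 = (r * s) / (4 * τ) by field_simp; norm_num,
      div_rpow (by positivity) (by positivity), show ζ - 1 / 2 = -(1 / 2 - ζ) by ring,
      rpow_neg (by positivity), rpow_neg (by positivity)]
    have : 0 < (r * s) ^ (1 / 2 - ζ) := by positivity
    field_simp
  rw [besselHeat, h1, ← h2]
  ring

/-- The function `τ ^ (-1/2) * (τ + b) ^ (-ζ) * exp (-k / τ)`, which for `b = (r + s) ^ 2` and `k`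
a multiple of `(r - s) ^ 2` governs the Bessel heat kernel. -/
noncomputable def gaussWeight (ζ b k τ : ℝ) : ℝ :=
  τ ^ (-(1 / 2) : ℝ) * (τ + b) ^ (-ζ) * exp (-(k / τ))

lemma measurable_gaussWeight (ζ b k : ℝ) : Measurable (gaussWeight ζ b k) := by
  unfold gaussWeight
  fun_prop

lemma gaussWeight_nonneg (ζ k : ℝ) {b τ : ℝ} (hb : 0 ≤ b) (hτ : 0 < τ) :
    0 ≤ gaussWeight ζ b k τ := by
  unfold gaussWeight
  positivity

lemma exists_besselHeat_bounds {ζ : ℝ} (hζ : -1 / 2 < ζ) :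
    ∃ c C, 0 < c ∧ 0 < C ∧ ∀ r s τ : ℝ, 0 < r → 0 < s → 0 < τ →
      c * gaussWeight ζ ((r + s) ^ 2) (3 * |r - s| ^ 2 / 8) τ ≤ besselHeat ζ τ r s ∧
      besselHeat ζ τ r s ≤ C * gaussWeight ζ ((r + s) ^ 2) (|r - s| ^ 2 / 8) τ := by
  obtain ⟨c, C, hc, hC, h⟩ := exists_besselSeries_bounds hζ
  obtain ⟨B, hB, hBe⟩ := exists_one_add_rpow_le_exp |ζ| one_pos
  set M : ℝ := 4 ^ (1 / 2 - ζ) / 2 with hM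
  have hM0 : 0 < M := by positivity
  refine ⟨c * M * (8 ^ |ζ| * B)⁻¹, C * M * (8 ^ |ζ| * B), by positivity, by positivity,
    fun r s τ hr hs hτ => ?_⟩
  obtain ⟨h1, h2⟩ := h (r * s / (2 * τ)) (by positivity)
  rw [besselHeat_eq_besselSeries ζ hτ hr hs, sq_abs]
  set v := (r - s) ^ 2 / (8 * τ) with hv
  have hv0 : 0 ≤ v := by positivity
  set Q := (τ + (r + s) ^ 2) / (τ + r * s / 2) with hQ
  have hrs : 0 < r * s := by positivity
  have hQ1 : 1 ≤ Q := by
    rw [hQ, one_le_div (by positivity)]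
    nlinarith
  have hQ2 : Q ≤ 8 * (1 + v) := by
    rw [hQ, div_le_iff₀ (by positivity)]
    have : 8 * (1 + v) * (τ + r * s / 2) - (τ + (r + s) ^ 2) = 7 * τ + 4 * v * (r * s) := by
      rw [hv]; field_simp; ring
    have : 0 ≤ 7 * τ + 4 * v * (r * s) := by positivity
    linarith
  have hQ3 : Q ^ |ζ| ≤ 8 ^ |ζ| * B * exp v := by
    calc Q ^ |ζ| ≤ (8 * (1 + v)) ^ |ζ| := by gcongr
      _ = 8 ^ |ζ| * (1 + v) ^ |ζ| := by rw [mul_rpow (by norm_num) (by positivity)]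
      _ ≤ 8 ^ |ζ| * (B * exp (1 * v)) := by gcongr; exact hBe v hv0
      _ = _ := by rw [one_mul]; ring
  have hQ4 : Q ^ ζ ≤ 8 ^ |ζ| * B * exp v :=
    (rpow_le_rpow_of_exponent_le hQ1 (le_abs_self ζ)).trans hQ3
  have hQ5 : (8 ^ |ζ| * B)⁻¹ * exp (-v) ≤ Q ^ ζ := by
    calc (8 ^ |ζ| * B)⁻¹ * exp (-v) = (8 ^ |ζ| * B * exp v)⁻¹ := by rw [exp_neg, mul_inv, mul_inv, mul_inv]
      _ ≤ (Q ^ |ζ|)⁻¹ := by gcongr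
      _ = Q ^ (-|ζ|) := (rpow_neg (by positivity) _).symm
      _ ≤ Q ^ ζ := rpow_le_rpow_of_exponent_le hQ1 (neg_abs_le ζ)
  have key : (4 * τ) ^ (1 / 2 - ζ) / (2 * τ) * exp (-(r ^ 2 + s ^ 2) / (4 * τ)) *
      (exp (r * s / (2 * τ)) * (1 + r * s / (2 * τ)) ^ (-ζ)) =
      M * (τ ^ (-(1 / 2) : ℝ) * (τ + (r + s) ^ 2) ^ (-ζ)) * exp (-(2 * v)) * Q ^ ζ := by
    have e1 : exp (-(r ^ 2 + s ^ 2) / (4 * τ)) * exp (r * s / (2 * τ)) = exp (-(2 * v)) := by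
      rw [← exp_add, hv]; congr 1; field_simp; ring
    have e2 : (1 + r * s / (2 * τ)) ^ (-ζ) = τ ^ ζ * (τ + (r + s) ^ 2) ^ (-ζ) * Q ^ ζ := by
      rw [hQ, show 1 + r * s / (2 * τ) = (τ + r * s / 2) / τ by field_simp,
        div_rpow (by positivity) (by positivity), div_rpow (by positivity) (by positivity),
        rpow_neg (by positivity), rpow_neg (by positivity), rpow_neg (by positivity)]
      have h3 : 0 < (τ + (r + s) ^ 2) ^ ζ := by positivity
      have h4 : 0 < (τ + r * s / 2) ^ ζ := by positivity
      have h5 : 0 < τ ^ ζ := by positivity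
      field_simp
    have e3 : (4 * τ) ^ (1 / 2 - ζ) / (2 * τ) * τ ^ ζ = M * τ ^ (-(1 / 2) : ℝ) := by
      rw [mul_rpow (by norm_num) hτ.le, hM, show (-(1 / 2) : ℝ) = 1 / 2 - ζ - 1 + ζ by ring,
        rpow_add hτ, rpow_sub_one hτ.ne']
      field_simp
    rw [e2]
    calc _ = ((4 * τ) ^ (1 / 2 - ζ) / (2 * τ) * τ ^ ζ) *
          (exp (-(r ^ 2 + s ^ 2) / (4 * τ)) * exp (r * s / (2 * τ))) *
          (τ + (r + s) ^ 2) ^ (-ζ) * Q ^ ζ := by ring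
      _ = _ := by rw [e1, e3]; ring
  have hP : 0 ≤ (4 * τ) ^ (1 / 2 - ζ) / (2 * τ) * exp (-(r ^ 2 + s ^ 2) / (4 * τ)) := by positivity
  have hN : 0 ≤ M * (τ ^ (-(1 / 2) : ℝ) * (τ + (r + s) ^ 2) ^ (-ζ)) * exp (-(2 * v)) := by
    positivity
  have ev1 : exp (-(3 * (r - s) ^ 2 / 8 / τ)) = exp (-(2 * v)) * exp (-v) := by
    rw [← exp_add, hv]; congr 1; field_simp; ring
  have ev2 : exp (-((r - s) ^ 2 / 8 / τ)) = exp (-(2 * v)) * exp v := by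
    rw [← exp_add, hv]; congr 1; field_simp; ring
  constructor
  · refine le_trans ?_ (mul_le_mul_of_nonneg_left h1 hP)
    have h6 := mul_le_mul_of_nonneg_left (mul_le_mul_of_nonneg_left hQ5 hN) hc.le
    rw [← key] at h6
    refine (le_of_eq ?_).trans (h6.trans_eq (by ring))
    rw [gaussWeight, ev1]
    ring
  · refine (mul_le_mul_of_nonneg_left h2 hP).trans ?_
    have h6 := mul_le_mul_of_nonneg_left (mul_le_mul_of_nonneg_left hQ4 hN) hC.le
    rw [← key] at h6
    refine (Eq.le (by ring)).trans (h6.trans_eq ?_)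
    rw [gaussWeight, ev2]
    ring

/-- `μ` is carried by `(0, ∞)` and its Laplace transform is `l ↦ exp (-t * l ^ (α / 2))`. -/
structure HasStableLaplace (α t : ℝ) (μ : Measure ℝ) : Prop where
  ae_pos : ∀ᵐ τ ∂μ, 0 < τ
  laplace : ∀ l : ℝ, 0 ≤ l → ∫ τ, exp (-τ * l) ∂μ = exp (-t * l ^ (α / 2))

namespace HasStableLaplace

variable {α t : ℝ} {μ : Measure ℝ} [IsProbabilityMeasure μ]

lemma integrable_exp (h : HasStableLaplace α t μ) {l : ℝ} (hl : 0 ≤ l) :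
    Integrable (fun τ => exp (-τ * l)) μ := by
  refine (integrable_const (1 : ℝ)).mono' (by fun_prop) ?_
  filter_upwards [h.ae_pos] with τ hτ
  rw [norm_of_nonneg (exp_pos _).le, exp_le_one_iff]
  nlinarith

lemma integrable_one_sub_exp (h : HasStableLaplace α t μ) {l : ℝ} (hl : 0 ≤ l) :
    Integrable (fun τ => 1 - exp (-τ * l)) μ :=
  (integrable_const _).sub (h.integrable_exp hl)

lemma integral_one_sub_exp (h : HasStableLaplace α t μ) {l : ℝ} (hl : 0 ≤ l) :
    ∫ τ, (1 - exp (-τ * l)) ∂μ = 1 - exp (-t * l ^ (α / 2)) := by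
  rw [integral_sub (integrable_const _) (h.integrable_exp hl), h.laplace l hl]
  simp

lemma integral_one_sub_exp_le (h : HasStableLaplace α t μ) {l : ℝ} (hl : 0 ≤ l) :
    ∫ τ, (1 - exp (-τ * l)) ∂μ ≤ t * l ^ (α / 2) := by
  rw [h.integral_one_sub_exp hl]
  linarith [add_one_le_exp (-t * l ^ (α / 2))]

end HasStableLaplace

lemma HasStableLaplace.exists_integral_rpow_neg_le {α p : ℝ} (hα : 0 < α) (hp : 0 < p) :
    ∃ C, 0 < C ∧ ∀ (t : ℝ) (μ : Measure ℝ) [IsProbabilityMeasure μ], 0 < t →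
      HasStableLaplace α t μ → Integrable (fun τ => τ ^ (-p)) μ ∧
        ∫ τ, τ ^ (-p) ∂μ ≤ C * (t ^ (2 / α)) ^ (-p) := by
  have hΓ := Gamma_pos_of_pos hp
  have hΓ' : 0 < Gamma (p / (α / 2)) := Gamma_pos_of_pos (by positivity)
  refine ⟨(Gamma p)⁻¹ * (1 / (α / 2) * Gamma (p / (α / 2))), by positivity, fun t μ _ ht h => ?_⟩
  have hint : ∀ τ, 0 < τ →
      ENNReal.ofReal (τ ^ (-p)) = ENNReal.ofReal (Gamma p)⁻¹ *
        ∫⁻ l in Ioi (0 : ℝ), ENNReal.ofReal (l ^ (p - 1) * exp (-τ * l)) := fun τ hτ => by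
    have hi := integrableOn_rpow_mul_exp_neg_mul_rpow (p := 1) (s := p - 1) (by linarith) one_pos hτ
    have hv := integral_rpow_mul_exp_neg_mul_Ioi hp hτ
    simp only [rpow_one] at hi
    simp only [← neg_mul] at hv
    rw [← ofReal_integral_eq_lintegral_ofReal hi, hv, ← ENNReal.ofReal_mul (by positivity)]
    · congr 1
      rw [rpow_neg hτ.le, one_div, inv_rpow hτ.le]
      field_simp
    · filter_upwards [ae_restrict_mem measurableSet_Ioi] with l hl
      have : (0 : ℝ) < l := hl
      simp only [Pi.zero_apply]
      positivity
  have hinner : ∀ l ∈ Ioi (0 : ℝ), ∫⁻ τ, ENNReal.ofReal (l ^ (p - 1) * exp (-τ * l)) ∂μ =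
      ENNReal.ofReal (l ^ (p - 1) * exp (-t * l ^ (α / 2))) := fun l hl => by
    have hl' : (0 : ℝ) < l := hl
    rw [← h.laplace l hl'.le, ← integral_const_mul,
      ofReal_integral_eq_lintegral_ofReal ((h.integrable_exp hl'.le).const_mul _)]
    exact ae_of_all _ fun τ => by positivity
  have htot : ∫⁻ τ, ENNReal.ofReal (τ ^ (-p)) ∂μ =
      ENNReal.ofReal ((Gamma p)⁻¹ * (1 / (α / 2) * Gamma (p / (α / 2))) * (t ^ (2 / α)) ^ (-p)) := by
    rw [lintegral_congr_ae (h.ae_pos.mono hint), lintegral_const_mul' _ _ ENNReal.ofReal_ne_top,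
      lintegral_lintegral_swap (by fun_prop),
      setLIntegral_congr_fun measurableSet_Ioi hinner,
      ← ofReal_integral_eq_lintegral_ofReal
        (integrableOn_rpow_mul_exp_neg_mul_rpow (by linarith) (by positivity) ht),
      integral_rpow_mul_exp_neg_mul_rpow (by positivity) (by linarith) ht,
      ← ENNReal.ofReal_mul (by positivity), sub_add_cancel, ← rpow_mul ht.le]
    · congr 1
      rw [show -p / (α / 2) = 2 / α * -p by field_simp]
      ring
    · filter_upwards [ae_restrict_mem measurableSet_Ioi] with l hl
      have : (0 : ℝ) < l := hl
      simp only [Pi.zero_apply]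
      positivity
  have hnn : 0 ≤ᵐ[μ] fun τ => τ ^ (-p) := h.ae_pos.mono fun τ hτ => by
    simp only [Pi.zero_apply]; positivity
  have hm : AEStronglyMeasurable (fun τ : ℝ => τ ^ (-p)) μ := by
    apply Measurable.aestronglyMeasurable; fun_prop
  refine ⟨⟨hm, ?_⟩, ?_⟩
  · rw [hasFiniteIntegral_iff_ofReal hnn, htot]
    exact ENNReal.ofReal_lt_top
  · rw [integral_eq_lintegral_of_nonneg_ae hnn hm, htot, ENNReal.toReal_ofReal (by positivity)]

lemma div_one_add_le_one_sub_exp_neg {u : ℝ} (hu : 0 ≤ u) : u / (1 + u) ≤ 1 - exp (-u) := by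
  have h1 : exp (-u) ≤ (1 + u)⁻¹ := by
    rw [exp_neg]
    exact inv_anti₀ (by linarith) (by linarith [add_one_le_exp u])
  have h2 : u / (1 + u) = 1 - (1 + u)⁻¹ := by field_simp; ring
  linarith

lemma half_le_one_sub_exp_neg {u : ℝ} (hu : 0 ≤ u) (hu1 : u ≤ 1) : u / 2 ≤ 1 - exp (-u) := by
  refine le_trans ?_ (div_one_add_le_one_sub_exp_neg hu)
  exact div_le_div_of_nonneg_left hu (by linarith) (by linarith)

lemma HasStableLaplace.exists_le_measureReal_Icc {α : ℝ} (hα0 : 0 < α) (hα2 : α < 2) :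
    ∃ ε K, 0 < ε ∧ ε ≤ 1 ∧ 1 ≤ K ∧ ∀ (t : ℝ) (μ : Measure ℝ) [IsProbabilityMeasure μ], 0 < t →
      HasStableLaplace α t μ → ∀ a : ℝ, 0 < a → t * a⁻¹ ^ (α / 2) ≤ 1 →
        t * a⁻¹ ^ (α / 2) / 4 ≤ μ.real (Icc (ε * a) (K * a)) := by
  have hβ : 0 < 1 - α / 2 := by linarith
  set ε : ℝ := (1 / 16) ^ (1 / (1 - α / 2)) with hε
  set K : ℝ := 16 ^ (2 / α) with hK
  have hε0 : 0 < ε := by positivity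
  have hK0 : 0 < K := by positivity
  have hε1 : ε ≤ 1 := rpow_le_one (by norm_num) (by norm_num) (by positivity)
  have hK1 : 1 ≤ K := one_le_rpow (by norm_num) (by positivity)
  have hεp : ε * ε⁻¹ ^ (α / 2) = 1 / 16 := by
    rw [inv_rpow hε0.le, ← rpow_neg hε0.le]
    nth_rewrite 1 [← rpow_one ε]
    rw [← rpow_add hε0, ← sub_eq_add_neg, hε, ← rpow_mul (by norm_num), one_div_mul_cancel hβ.ne',
      rpow_one]
  have hKp : K⁻¹ ^ (α / 2) = 1 / 16 := by
    rw [inv_rpow hK0.le, hK, ← rpow_mul (by norm_num),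
      show 2 / α * (α / 2) = 1 by field_simp, rpow_one, one_div]
  refine ⟨ε, K, hε0, hε1, hK1, fun t μ _ ht h a ha hta => ?_⟩
  set θ := t * a⁻¹ ^ (α / 2) with hθ
  have hθ0 : 0 ≤ θ := by positivity
  have hi0 := h.integrable_one_sub_exp (l := a⁻¹) (by positivity)
  have hi1 := h.integrable_one_sub_exp (l := (ε * a)⁻¹) (by positivity)
  have hi2 := h.integrable_one_sub_exp (l := (K * a)⁻¹) (by positivity)
  have hiI : Integrable ((Icc (ε * a) (K * a)).indicator (fun _ : ℝ => (1 : ℝ))) μ :=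
    (integrable_const _).indicator measurableSet_Icc
  have hpt : ∀ᵐ τ ∂μ, 1 - exp (-τ * a⁻¹) ≤ (Icc (ε * a) (K * a)).indicator (fun _ => (1 : ℝ)) τ +
      (2 * ε * (1 - exp (-τ * (ε * a)⁻¹)) + 2 * (1 - exp (-τ * (K * a)⁻¹))) := by
    filter_upwards [h.ae_pos] with τ hτ
    have n1 : 0 ≤ 1 - exp (-τ * (ε * a)⁻¹) := by
      rw [sub_nonneg, exp_le_one_iff, neg_mul, neg_nonpos]; positivity
    have n2 : 0 ≤ 1 - exp (-τ * (K * a)⁻¹) := by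
      rw [sub_nonneg, exp_le_one_iff, neg_mul, neg_nonpos]; positivity
    have n1' : 0 ≤ 2 * ε * (1 - exp (-τ * (ε * a)⁻¹)) := by positivity
    have n3 := exp_pos (-τ * a⁻¹)
    by_cases hmem : τ ∈ Icc (ε * a) (K * a)
    · rw [indicator_of_mem hmem]
      linarith
    · rw [indicator_of_notMem hmem, zero_add]
      rw [mem_Icc, not_and_or, not_le, not_le] at hmem
      rcases hmem with hlt | hgt
      · have h1 := half_le_one_sub_exp_neg (u := τ * (ε * a)⁻¹) (by positivity) (by
          rw [← div_eq_mul_inv, div_le_one (by positivity)]; exact hlt.le)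
        have h2 := add_one_le_exp (-τ * a⁻¹)
        have h3 : 2 * ε * (τ * (ε * a)⁻¹ / 2) = τ * a⁻¹ := by field_simp
        rw [← neg_mul] at h1
        have h4 := mul_le_mul_of_nonneg_left h1 (by positivity : 0 ≤ 2 * ε)
        linarith
      · have h1 := half_le_one_sub_exp_neg (u := 1) (by norm_num) le_rfl
        have h2 : exp (-τ * (K * a)⁻¹) ≤ exp (-1) := by
          rw [exp_le_exp, neg_mul, neg_le_neg_iff, ← div_eq_mul_inv, one_le_div (by positivity)]
          exact hgt.le
        linarith
  have hI := integral_mono_ae hi0 (hiI.add ((hi1.const_mul (2 * ε)).add (hi2.const_mul 2))) hpt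
  have hi12 := (hi1.const_mul (2 * ε)).add (hi2.const_mul 2)
  simp only [Pi.add_def] at hI hi12
  rw [integral_add hiI hi12,
    integral_add (hi1.const_mul (2 * ε)) (hi2.const_mul 2), integral_const_mul,
    integral_const_mul, integral_indicator_const _ measurableSet_Icc, smul_eq_mul, mul_one,
    h.integral_one_sub_exp (by positivity)] at hI
  have b1 := h.integral_one_sub_exp_le (l := (ε * a)⁻¹) (by positivity)
  have b2 := h.integral_one_sub_exp_le (l := (K * a)⁻¹) (by positivity)
  have b0 := half_le_one_sub_exp_neg hθ0 hta
  rw [mul_inv, mul_rpow (by positivity) (by positivity)] at b1 b2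
  rw [hKp] at b2
  have b1' := mul_le_mul_of_nonneg_left b1 (by positivity : 0 ≤ 2 * ε)
  have e1 : 2 * ε * (t * (ε⁻¹ ^ (α / 2) * a⁻¹ ^ (α / 2))) = θ / 8 := by
    calc _ = 2 * (ε * ε⁻¹ ^ (α / 2)) * θ := by rw [hθ]; ring
      _ = _ := by rw [hεp]; ring
  have e2 : t * (1 / 16 * a⁻¹ ^ (α / 2)) = θ / 16 := by rw [hθ]; ring
  rw [e1] at b1'
  rw [e2] at b2
  rw [neg_mul, ← hθ] at hI
  rw [mul_inv] at hI
  rw [mul_inv] at hI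
  linarith

lemma add_rpow_neg_le {a b τ : ℝ} (ζ : ℝ) (ha : 0 < a) (hb : 0 ≤ b) (hτ : 0 < τ) :
    (τ + b) ^ (-ζ) ≤ (a + b) ^ (-ζ) * (1 + (τ / a) ^ (-ζ)) := by
  have key : ((τ + b) / (a + b)) ^ (-ζ) ≤ 1 + (τ / a) ^ (-ζ) := by
    rcases le_total τ a with h | h
    · have h1 : τ / a ≤ (τ + b) / (a + b) := by
        rw [div_le_div_iff₀ ha (by positivity)]; nlinarith
      have h2 : (τ + b) / (a + b) ≤ 1 := by rw [div_le_one (by positivity)]; linarith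
      have := rpow_le_rpow_add_rpow (by positivity) h1 h2 (-ζ)
      rw [one_rpow] at this
      linarith
    · have h1 : (τ + b) / (a + b) ≤ τ / a := by
        rw [div_le_div_iff₀ (by positivity) ha]; nlinarith
      have h2 : 1 ≤ (τ + b) / (a + b) := by rw [one_le_div (by positivity)]; linarith
      have := rpow_le_rpow_add_rpow one_pos h2 h1 (-ζ)
      rwa [one_rpow] at this
  calc (τ + b) ^ (-ζ) = (a + b) ^ (-ζ) * ((τ + b) / (a + b)) ^ (-ζ) := by
        rw [← mul_rpow (by positivity) (by positivity)]; congr 1; field_simp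
    _ ≤ _ := by gcongr

lemma gaussWeight_le {a b k τ : ℝ} (ζ : ℝ) (ha : 0 < a) (hb : 0 ≤ b) (hτ : 0 < τ) :
    gaussWeight ζ b k τ ≤
      (a + b) ^ (-ζ) * (τ ^ (-(1 / 2) : ℝ) + a ^ ζ * τ ^ (-(1 / 2 + ζ))) * exp (-(k / τ)) := by
  have h := add_rpow_neg_le ζ ha hb hτ
  rw [gaussWeight]
  refine mul_le_mul_of_nonneg_right ?_ (exp_pos _).le
  calc τ ^ (-(1 / 2) : ℝ) * (τ + b) ^ (-ζ)
      ≤ τ ^ (-(1 / 2) : ℝ) * ((a + b) ^ (-ζ) * (1 + (τ / a) ^ (-ζ))) := by gcongr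
    _ = _ := by
      rw [div_rpow hτ.le ha.le, rpow_neg ha.le ζ, div_inv_eq_mul, show -(1 / 2 + ζ) = -(1 / 2) + -ζ by ring, rpow_add hτ]
      ring

lemma HasStableLaplace.exists_integral_gaussWeight_le {α ζ : ℝ} (hα : 0 < α) (hζ : -1 / 2 < ζ) :
    ∃ C, 0 < C ∧ ∀ (t : ℝ) (μ : Measure ℝ) [IsProbabilityMeasure μ], 0 < t →
      HasStableLaplace α t μ → ∀ b k : ℝ, 0 ≤ b → 0 ≤ k →
        Integrable (gaussWeight ζ b k) μ ∧ ∫ τ, gaussWeight ζ b k τ ∂μ ≤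
          C * ((t ^ (2 / α)) ^ (-(1 / 2) : ℝ) * (t ^ (2 / α) + b) ^ (-ζ)) := by
  obtain ⟨A, hA, hAi⟩ :=
    HasStableLaplace.exists_integral_rpow_neg_le hα (show (0 : ℝ) < 1 / 2 by norm_num)
  obtain ⟨B, hB, hBi⟩ :=
    HasStableLaplace.exists_integral_rpow_neg_le hα (show (0 : ℝ) < 1 / 2 + ζ by linarith)
  refine ⟨A + B, by positivity, fun t μ _ ht h b k hb hk => ?_⟩
  obtain ⟨i1, l1⟩ := hAi t μ ht h
  obtain ⟨i2, l2⟩ := hBi t μ ht h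
  set a := t ^ (2 / α) with ha
  have ha0 : 0 < a := by positivity
  have hle : ∀ τ, 0 < τ → gaussWeight ζ b k τ ≤
      (a + b) ^ (-ζ) * (τ ^ (-(1 / 2) : ℝ) + a ^ ζ * τ ^ (-(1 / 2 + ζ))) := fun τ hτ => by
    refine (gaussWeight_le ζ ha0 hb hτ).trans (mul_le_of_le_one_right (by positivity) ?_)
    rw [exp_le_one_iff, neg_nonpos]
    positivity
  have hi := (i1.add (i2.const_mul (a ^ ζ))).const_mul ((a + b) ^ (-ζ))
  simp only [Pi.add_def] at hi
  have hint : Integrable (gaussWeight ζ b k) μ := by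
    refine hi.mono' (measurable_gaussWeight ζ b k).aestronglyMeasurable ?_
    filter_upwards [h.ae_pos] with τ hτ
    rw [norm_of_nonneg (gaussWeight_nonneg ζ k hb hτ)]
    exact hle τ hτ
  refine ⟨hint, ?_⟩
  calc _ ≤ ∫ τ, (a + b) ^ (-ζ) * (τ ^ (-(1 / 2) : ℝ) + a ^ ζ * τ ^ (-(1 / 2 + ζ))) ∂μ :=
        integral_mono_ae hint hi (h.ae_pos.mono hle)
    _ = (a + b) ^ (-ζ) * (∫ τ, τ ^ (-(1 / 2) : ℝ) ∂μ + a ^ ζ * ∫ τ, τ ^ (-(1 / 2 + ζ)) ∂μ) := by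
        rw [integral_const_mul, integral_add i1 (i2.const_mul _), integral_const_mul]
    _ ≤ (a + b) ^ (-ζ) * (A * a ^ (-(1 / 2) : ℝ) + a ^ ζ * (B * a ^ (-(1 / 2 + ζ)))) := by gcongr
    _ = (a + b) ^ (-ζ) * (A * a ^ (-(1 / 2) : ℝ) + B * (a ^ ζ * a ^ (-(1 / 2 + ζ)))) := by ring
    _ = _ := by
        rw [← rpow_add ha0, show ζ + -(1 / 2 + ζ) = -(1 / 2) by ring]
        ring

lemma exists_rpow_neg_mul_exp_le {p : ℝ} (hp : 0 < p) :
    ∃ C, 0 < C ∧ ∀ u : ℝ, 0 < u → u ^ (-p) * exp (-(1 / (8 * u))) ≤ C * (1 - exp (-u)) := by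
  obtain ⟨C, hC, h⟩ := exists_one_add_rpow_le_exp (p + 1) (show (0 : ℝ) < 1 / 8 by norm_num)
  refine ⟨C, hC, fun u hu => ?_⟩
  have h1 := h u⁻¹ (by positivity)
  have h2 : u ^ (-p) ≤ (1 + u⁻¹) ^ p := by
    rw [rpow_neg hu.le, ← inv_rpow hu.le]
    gcongr
    linarith
  have h3 : exp (1 / 8 * u⁻¹) * exp (-(1 / (8 * u))) = 1 := by
    rw [← exp_add, exp_eq_one_iff]; field_simp; ring
  rw [rpow_add_one (by positivity)] at h1
  calc u ^ (-p) * exp (-(1 / (8 * u)))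
      ≤ (1 + u⁻¹) ^ p * exp (-(1 / (8 * u))) := by gcongr
    _ = ((1 + u⁻¹) ^ p * (1 + u⁻¹)) * exp (-(1 / (8 * u))) * (u / (1 + u)) := by
      field_simp; ring
    _ ≤ C * exp (1 / 8 * u⁻¹) * exp (-(1 / (8 * u))) * (u / (1 + u)) := by gcongr
    _ = C * (u / (1 + u)) := by rw [mul_assoc C, h3, mul_one]
    _ ≤ _ := by gcongr; exact div_one_add_le_one_sub_exp_neg hu.le

lemma HasStableLaplace.exists_integral_gaussWeight_le_of_pos {α ζ : ℝ} (hα : 0 < α)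
    (hζ : -1 / 2 < ζ) :
    ∃ C, 0 < C ∧ ∀ (t : ℝ) (μ : Measure ℝ) [IsProbabilityMeasure μ], 0 < t →
      HasStableLaplace α t μ → ∀ b a : ℝ, 0 ≤ b → 0 < a →
        ∫ τ, gaussWeight ζ b (a / 8) τ ∂μ ≤
          C * (t * a⁻¹ ^ (α / 2) * (a ^ (-(1 / 2) : ℝ) * (a + b) ^ (-ζ))) := by
  obtain ⟨A, hA, hAi⟩ := exists_rpow_neg_mul_exp_le (show (0 : ℝ) < 1 / 2 by norm_num)
  obtain ⟨B, hB, hBi⟩ := exists_rpow_neg_mul_exp_le (show (0 : ℝ) < 1 / 2 + ζ by linarith)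
  obtain ⟨_, -, hI⟩ := HasStableLaplace.exists_integral_gaussWeight_le hα hζ
  refine ⟨A + B, by positivity, fun t μ _ ht h b a hb ha => ?_⟩
  have hint := (hI t μ ht h b (a / 8) hb (by positivity)).1
  have hle : ∀ τ, 0 < τ → gaussWeight ζ b (a / 8) τ ≤
      (A + B) * (a ^ (-(1 / 2) : ℝ) * (a + b) ^ (-ζ)) * (1 - exp (-τ * a⁻¹)) := fun τ hτ => by
    refine (gaussWeight_le ζ ha hb hτ).trans ?_
    have h1 := hAi (τ / a) (by positivity)
    have h2 := hBi (τ / a) (by positivity)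
    have e1 : τ ^ (-(1 / 2) : ℝ) = a ^ (-(1 / 2) : ℝ) * (τ / a) ^ (-(1 / 2) : ℝ) := by
      rw [← mul_rpow ha.le (by positivity)]; congr 1; field_simp
    have e2 : a ^ ζ * τ ^ (-(1 / 2 + ζ)) = a ^ (-(1 / 2) : ℝ) * (τ / a) ^ (-(1 / 2 + ζ)) := by
      rw [div_rpow hτ.le ha.le, show (-(1 / 2) : ℝ) = ζ + -(1 / 2 + ζ) by ring, rpow_add ha]
      ring_nf
      have : a ^ (-1 / 2 - ζ) ≠ 0 := by positivity
      field_simp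
    have e3 : a / 8 / τ = 1 / (8 * (τ / a)) := by field_simp
    rw [e1, e2, e3]
    calc _ = a ^ (-(1 / 2) : ℝ) * (a + b) ^ (-ζ) *
          ((τ / a) ^ (-(1 / 2) : ℝ) * exp (-(1 / (8 * (τ / a)))) +
            (τ / a) ^ (-(1 / 2 + ζ)) * exp (-(1 / (8 * (τ / a))))) := by ring
      _ ≤ a ^ (-(1 / 2) : ℝ) * (a + b) ^ (-ζ) *
          (A * (1 - exp (-(τ / a))) + B * (1 - exp (-(τ / a)))) := by gcongr
      _ = _ := by rw [div_eq_mul_inv, neg_mul]; ring_nf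
  have hi := (h.integrable_one_sub_exp (l := a⁻¹) (by positivity)).const_mul
    ((A + B) * (a ^ (-(1 / 2) : ℝ) * (a + b) ^ (-ζ)))
  refine (integral_mono_ae hint hi (h.ae_pos.mono hle)).trans ?_
  rw [integral_const_mul]
  calc _ ≤ (A + B) * (a ^ (-(1 / 2) : ℝ) * (a + b) ^ (-ζ)) * (t * a⁻¹ ^ (α / 2)) := by
        gcongr
        exact h.integral_one_sub_exp_le (by positivity)
    _ = _ := by ring

lemma HasStableLaplace.exists_le_integral_gaussWeight {α ζ : ℝ} (hα0 : 0 < α) (hα2 : α < 2)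
    (hζ : -1 / 2 < ζ) :
    ∃ c, 0 < c ∧ ∀ (t : ℝ) (μ : Measure ℝ) [IsProbabilityMeasure μ], 0 < t →
      HasStableLaplace α t μ → ∀ b k a : ℝ, 0 ≤ b → 0 ≤ k → 0 < a → k ≤ a →
        t * a⁻¹ ^ (α / 2) ≤ 1 →
        c * (t * a⁻¹ ^ (α / 2) * (a ^ (-(1 / 2) : ℝ) * (a + b) ^ (-ζ))) ≤
          ∫ τ, gaussWeight ζ b k τ ∂μ := by
  obtain ⟨ε, K, hε, hε1, hK, hm⟩ := HasStableLaplace.exists_le_measureReal_Icc hα0 hα2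
  obtain ⟨_, -, hI⟩ := HasStableLaplace.exists_integral_gaussWeight_le hα0 hζ
  have hK0 : 0 < K := by linarith
  set M := K ^ (-(1 / 2) : ℝ) * (ε ^ ζ + K ^ ζ)⁻¹ * exp (-(1 / ε)) with hM
  have hM0 : 0 < M := by positivity
  refine ⟨M / 4, by positivity, fun t μ _ ht h b k a hb hk ha hka hta => ?_⟩
  have hmass := hm t μ ht h a ha hta
  have hint := (hI t μ ht h b k hb hk).1
  set P := M * (a ^ (-(1 / 2) : ℝ) * (a + b) ^ (-ζ)) with hP
  have hP0 : 0 ≤ P := by positivity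
  have hpt : ∀ᵐ τ ∂μ, (Icc (ε * a) (K * a)).indicator (fun _ => P) τ ≤ gaussWeight ζ b k τ := by
    filter_upwards [h.ae_pos] with τ hτ
    by_cases hmem : τ ∈ Icc (ε * a) (K * a)
    · rw [indicator_of_mem hmem]
      obtain ⟨h1, h2⟩ := hmem
      have g1 : K ^ (-(1 / 2) : ℝ) * a ^ (-(1 / 2) : ℝ) ≤ τ ^ (-(1 / 2) : ℝ) := by
        rw [← mul_rpow hK0.le ha.le]
        exact rpow_le_rpow_of_nonpos hτ h2 (by norm_num)
      have g2 : (ε ^ ζ + K ^ ζ)⁻¹ * (a + b) ^ (-ζ) ≤ (τ + b) ^ (-ζ) := by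
        have r1 : ε ≤ (τ + b) / (a + b) := by
          rw [le_div_iff₀ (by positivity)]; nlinarith
        have r2 : (τ + b) / (a + b) ≤ K := by
          rw [div_le_iff₀ (by positivity)]; nlinarith
        have r3 := rpow_le_rpow_add_rpow hε r1 r2 ζ
        calc (ε ^ ζ + K ^ ζ)⁻¹ * (a + b) ^ (-ζ)
            ≤ (((τ + b) / (a + b)) ^ ζ)⁻¹ * (a + b) ^ (-ζ) := by gcongr
          _ = (τ + b) ^ (-ζ) := by
            rw [div_rpow (by positivity) (by positivity), inv_div, rpow_neg (by positivity),
              rpow_neg (by positivity)]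
            have : 0 < (a + b) ^ ζ := by positivity
            field_simp
      have g3 : exp (-(1 / ε)) ≤ exp (-(k / τ)) := by
        rw [exp_le_exp, neg_le_neg_iff, div_le_div_iff₀ hτ hε]
        nlinarith
      calc P = (K ^ (-(1 / 2) : ℝ) * a ^ (-(1 / 2) : ℝ)) * ((ε ^ ζ + K ^ ζ)⁻¹ * (a + b) ^ (-ζ)) *
            exp (-(1 / ε)) := by rw [hP, hM]; ring
        _ ≤ τ ^ (-(1 / 2) : ℝ) * (τ + b) ^ (-ζ) * exp (-(k / τ)) := by gcongr
    · rw [indicator_of_notMem hmem]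
      exact gaussWeight_nonneg ζ k hb hτ
  have hI2 := integral_mono_ae ((integrable_const P).indicator measurableSet_Icc) hint hpt
  rw [integral_indicator_const _ measurableSet_Icc, smul_eq_mul] at hI2
  refine le_trans ?_ hI2
  calc _ = t * a⁻¹ ^ (α / 2) / 4 * P := by rw [hP]; ring
    _ ≤ _ := by gcongr

/-- The measure with density `σ t` on `(0, ∞)`. -/
noncomputable def subordinatorMeasure (σ : ℝ → ℝ → ℝ) (t : ℝ) : Measure ℝ :=
  (volume.restrict (Ioi 0)).withDensity fun τ => ENNReal.ofReal (σ t τ)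

section

variable {α : ℝ} {σ : ℝ → ℝ → ℝ} {t : ℝ}

lemma IsStableSubordinatorDensity.integral_subordinatorMeasure
    (hσ : IsStableSubordinatorDensity α σ) (ht : 0 < t) (f : ℝ → ℝ) :
    ∫ τ, f τ ∂(subordinatorMeasure σ t) = ∫ τ in Ioi 0, f τ * σ t τ := by
  rw [subordinatorMeasure, integral_withDensity_eq_integral_toReal_smul
    (hσ.2.1 t ht).ennreal_ofReal (ae_of_all _ fun _ => ENNReal.ofReal_lt_top)]
  refine setIntegral_congr_fun measurableSet_Ioi fun τ hτ => ?_
  simp only [smul_eq_mul]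
  rw [ENNReal.toReal_ofReal (hσ.1 t ht τ hτ), mul_comm]

lemma IsStableSubordinatorDensity.isProbabilityMeasure_subordinatorMeasure
    (hσ : IsStableSubordinatorDensity α σ) (hα : 0 < α) (ht : 0 < t) :
    IsProbabilityMeasure (subordinatorMeasure σ t) := by
  have h1 : ∫ τ in Ioi (0 : ℝ), σ t τ = 1 := by
    have := hσ.2.2 t 0 ht le_rfl
    rw [zero_rpow (by positivity)] at this
    simpa using this
  have hi : IntegrableOn (σ t) (Ioi 0) := by
    by_contra hn
    rw [integral_undef hn] at h1
    exact zero_ne_one h1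
  refine ⟨?_⟩
  rw [subordinatorMeasure, withDensity_apply _ MeasurableSet.univ, Measure.restrict_univ,
    ← ofReal_integral_eq_lintegral_ofReal hi, h1, ENNReal.ofReal_one]
  filter_upwards [ae_restrict_mem measurableSet_Ioi] with τ hτ using hσ.1 t ht τ hτ

lemma IsStableSubordinatorDensity.hasStableLaplace (hσ : IsStableSubordinatorDensity α σ)
    (ht : 0 < t) : HasStableLaplace α t (subordinatorMeasure σ t) where
  ae_pos := (withDensity_absolutelyContinuous _ _).ae_le (ae_restrict_mem measurableSet_Ioi)
  laplace l hl := by rw [hσ.integral_subordinatorMeasure ht, hσ.2.2 t l ht hl]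

end

lemma exists_subKernel_bounds {ζ α : ℝ} {σ : ℝ → ℝ → ℝ} (hζ : -1 / 2 < ζ) (hα : 0 < α)
    (hσ : IsStableSubordinatorDensity α σ) :
    ∃ c C, 0 < c ∧ 0 < C ∧ ∀ r s t : ℝ, 0 < r → 0 < s → 0 < t →
      c * ∫ τ, gaussWeight ζ ((r + s) ^ 2) (3 * |r - s| ^ 2 / 8) τ ∂(subordinatorMeasure σ t) ≤
        subKernel ζ σ t r s ∧
      subKernel ζ σ t r s ≤
        C * ∫ τ, gaussWeight ζ ((r + s) ^ 2) (|r - s| ^ 2 / 8) τ ∂(subordinatorMeasure σ t) := by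
  obtain ⟨c, C, hc, hC, h⟩ := exists_besselHeat_bounds hζ
  obtain ⟨_, -, hI⟩ := HasStableLaplace.exists_integral_gaussWeight_le hα hζ
  refine ⟨c, C, hc, hC, fun r s t hr hs ht => ?_⟩
  have := hσ.isProbabilityMeasure_subordinatorMeasure hα ht
  have hμ := hσ.hasStableLaplace ht
  have i1 := (hI t _ ht hμ ((r + s) ^ 2) (3 * |r - s| ^ 2 / 8) (by positivity)
    (by positivity)).1.const_mul c
  have i2 := (hI t _ ht hμ ((r + s) ^ 2) (|r - s| ^ 2 / 8) (by positivity)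
    (by positivity)).1.const_mul C
  have hm : AEStronglyMeasurable (fun τ => besselHeat ζ τ r s) (subordinatorMeasure σ t) := by
    have hmeas : Measurable fun τ : ℝ => (4 * τ) ^ (1 / 2 - ζ) / (2 * τ) *
        exp (-(r ^ 2 + s ^ 2) / (4 * τ)) * besselSeries ζ (r * s / (2 * τ)) := by
      have h1 : Measurable fun τ : ℝ => besselSeries ζ (r * s / (2 * τ)) :=
        (measurable_besselSeries ζ).comp (by fun_prop)
      fun_prop
    refine hmeas.aestronglyMeasurable.congr ?_
    filter_upwards [hμ.ae_pos] with τ hτ using (besselHeat_eq_besselSeries ζ hτ hr hs).symm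
  have hi : Integrable (fun τ => besselHeat ζ τ r s) (subordinatorMeasure σ t) := by
    refine i2.mono' hm ?_
    filter_upwards [hμ.ae_pos] with τ hτ
    obtain ⟨h1, h2⟩ := h r s τ hr hs hτ
    rwa [norm_of_nonneg
      ((mul_nonneg hc.le (gaussWeight_nonneg ζ _ (sq_nonneg _) hτ)).trans h1)]
  rw [subKernel, ← hσ.integral_subordinatorMeasure ht, ← integral_const_mul, ← integral_const_mul]
  exact ⟨integral_mono_ae i1 hi (hμ.ae_pos.mono fun τ hτ => (h r s τ hr hs hτ).1),
    integral_mono_ae hi i2 (hμ.ae_pos.mono fun τ hτ => (h r s τ hr hs hτ).2)⟩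

lemma rpow_le_mul_rpow_of_le_two_mul {x y : ℝ} (q : ℝ) (hx : 0 < x) (hxy : x ≤ y)
    (hyx : y ≤ 2 * x) :
    x ^ q ≤ (1 + 2 ^ q + (1 / 2) ^ q) * y ^ q ∧ y ^ q ≤ (1 + 2 ^ q + (1 / 2) ^ q) * x ^ q := by
  have hy : 0 < y := by linarith
  have h1 := rpow_le_rpow_add_rpow (by positivity) (show 1 / 2 * y ≤ x by linarith) hxy q
  have h2 := rpow_le_rpow_add_rpow hx hxy hyx q
  rw [mul_rpow (by norm_num) (by positivity)] at h1 h2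
  have : 0 < (2 : ℝ) ^ q * y ^ q := by positivity
  have : 0 < (1 / 2 : ℝ) ^ q * x ^ q := by positivity
  constructor <;> nlinarith

/-- The denominator attached to the squared length scale `a`. -/
noncomputable def scaleDenom (ζ α b a : ℝ) : ℝ :=
  a ^ ((1 + α) / 2) * (a + b) ^ ζ

lemma mul_rpow_eq_div_scaleDenom (ζ α t : ℝ) {a b : ℝ} (ha : 0 < a) (hb : 0 ≤ b) :
    t * a⁻¹ ^ (α / 2) * (a ^ (-(1 / 2) : ℝ) * (a + b) ^ (-ζ)) = t / scaleDenom ζ α b a := by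
  rw [scaleDenom, inv_rpow ha.le, rpow_neg ha.le, rpow_neg (by positivity), add_div, rpow_add ha]
  have : 0 < (a + b) ^ ζ := by positivity
  have : 0 < a ^ (α / 2) := by positivity
  have : 0 < a ^ (1 / 2 : ℝ) := by positivity
  field_simp

lemma exists_scaleDenom_comparable (ζ : ℝ) {α : ℝ} (hα : 0 < α) :
    ∃ κ, 0 < κ ∧ ∀ r s t : ℝ, 0 < r → 0 < s → 0 < t →
      |r - s| ^ (1 + α) * (r + s) ^ (2 * ζ) + t ^ ((1 + α) / α) * (t ^ (1 / α) + r + s) ^ (2 * ζ)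
        ≤ κ * (scaleDenom ζ α ((r + s) ^ 2) (|r - s| ^ 2) +
          scaleDenom ζ α ((r + s) ^ 2) (t ^ (2 / α))) ∧
      scaleDenom ζ α ((r + s) ^ 2) (|r - s| ^ 2) + scaleDenom ζ α ((r + s) ^ 2) (t ^ (2 / α)) ≤
        κ * (|r - s| ^ (1 + α) * (r + s) ^ (2 * ζ) +
          t ^ ((1 + α) / α) * (t ^ (1 / α) + r + s) ^ (2 * ζ)) := by
  refine ⟨1 + 2 ^ ζ + (1 / 2) ^ ζ, by positivity, fun r s t hr hs ht => ?_⟩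
  set κ : ℝ := 1 + 2 ^ ζ + (1 / 2) ^ ζ
  set T := t ^ (1 / α) with hT
  have hT0 : 0 < T := by positivity
  have hTT : t ^ (2 / α) = T ^ 2 := by
    rw [hT, ← rpow_natCast, ← rpow_mul ht.le]; congr 1; push_cast; ring
  have hd : |r - s| ^ (1 + α) = (|r - s| ^ 2) ^ ((1 + α) / 2) := by
    rw [← rpow_natCast, ← rpow_mul (abs_nonneg _)]; congr 1; push_cast; ring
  have hS : (r + s) ^ (2 * ζ) = ((r + s) ^ 2) ^ ζ := by
    rw [rpow_mul (by positivity), rpow_two]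
  have hTS : (T + r + s) ^ (2 * ζ) = ((T + r + s) ^ 2) ^ ζ := by
    rw [rpow_mul (by positivity), rpow_two]
  have ht' : t ^ ((1 + α) / α) = (T ^ 2) ^ ((1 + α) / 2) := by
    rw [← hTT, ← rpow_mul ht.le]; congr 1; field_simp
  have hrs := mul_pos hr hs
  obtain ⟨p1, p2⟩ := rpow_le_mul_rpow_of_le_two_mul ζ
    (x := (r + s) ^ 2) (y := |r - s| ^ 2 + (r + s) ^ 2) (by positivity)
    (by linarith [sq_nonneg |r - s|]) (by rw [sq_abs]; nlinarith)
  obtain ⟨q1, q2⟩ := rpow_le_mul_rpow_of_le_two_mul ζ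
    (x := T ^ 2 + (r + s) ^ 2) (y := (T + r + s) ^ 2) (by positivity)
    (by nlinarith [mul_pos hT0 hr, mul_pos hT0 hs]) (by nlinarith [sq_nonneg (T - (r + s))])
  rw [hTT, hd, hS, hTS, ht', scaleDenom, scaleDenom, mul_add, mul_add]
  have n1 : 0 ≤ (|r - s| ^ 2) ^ ((1 + α) / 2) := by positivity
  have n2 : 0 ≤ (T ^ 2) ^ ((1 + α) / 2) := by positivity
  exact ⟨(add_le_add (mul_le_mul_of_nonneg_left p1 n1) (mul_le_mul_of_nonneg_left q2 n2)).trans_eq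
      (by ring),
    (add_le_add (mul_le_mul_of_nonneg_left p2 n1) (mul_le_mul_of_nonneg_left q1 n2)).trans_eq
      (by ring)⟩

lemma scaleDenom_pos (ζ α : ℝ) {a b : ℝ} (ha : 0 < a) (hb : 0 ≤ b) : 0 < scaleDenom ζ α b a := by
  unfold scaleDenom
  positivity

lemma scaleDenom_nonneg (ζ α : ℝ) {a b : ℝ} (ha : 0 ≤ a) (hb : 0 ≤ b) :
    0 ≤ scaleDenom ζ α b a := by
  unfold scaleDenom
  positivity

theorem stmt2 (ζ α : ℝ) (hζ : -1/2 < ζ) (hα0 : 0 < α) (hα2 : α < 2)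
    (σ : ℝ → ℝ → ℝ) (hσ : IsStableSubordinatorDensity α σ) :
    ∃ c C : ℝ, 0 < c ∧ 0 < C ∧
      ∀ r s t : ℝ, 0 < r → 0 < s → 0 < t →
        c * t / (|r - s| ^ (1 + α) * (r + s) ^ (2 * ζ)
              + t ^ ((1 + α) / α) * (t ^ (1 / α) + r + s) ^ (2 * ζ))
            ≤ subKernel ζ σ t r s ∧
          subKernel ζ σ t r s
            ≤ C * t / (|r - s| ^ (1 + α) * (r + s) ^ (2 * ζ)
              + t ^ ((1 + α) / α) * (t ^ (1 / α) + r + s) ^ (2 * ζ)) := by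
  obtain ⟨a₁, A₁, ha₁, hA₁, hK⟩ := exists_subKernel_bounds hζ hα0 hσ
  obtain ⟨κ, hκ, hD⟩ := exists_scaleDenom_comparable ζ hα0
  obtain ⟨U, hU, hUb⟩ := HasStableLaplace.exists_integral_gaussWeight_le hα0 hζ
  obtain ⟨V, hV, hVb⟩ := HasStableLaplace.exists_integral_gaussWeight_le_of_pos hα0 hζ
  obtain ⟨W, hW, hWb⟩ := HasStableLaplace.exists_le_integral_gaussWeight hα0 hα2 hζ
  refine ⟨a₁ * W / κ, A₁ * κ * (U + V), by positivity, by positivity, fun r s t hr hs ht => ?_⟩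
  have := hσ.isProbabilityMeasure_subordinatorMeasure hα0 ht
  have hμ := hσ.hasStableLaplace ht
  obtain ⟨hK1, hK2⟩ := hK r s t hr hs ht
  obtain ⟨hD1, hD2⟩ := hD r s t hr hs ht
  have hDpos : 0 < |r - s| ^ (1 + α) * (r + s) ^ (2 * ζ) +
      t ^ ((1 + α) / α) * (t ^ (1 / α) + r + s) ^ (2 * ζ) := by positivity
  set D := |r - s| ^ (1 + α) * (r + s) ^ (2 * ζ) +
      t ^ ((1 + α) / α) * (t ^ (1 / α) + r + s) ^ (2 * ζ)
  set b := (r + s) ^ 2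
  set A := |r - s| ^ 2
  set B := t ^ (2 / α) with hB
  have hb : 0 ≤ b := sq_nonneg _
  have hA : 0 ≤ A := sq_nonneg _
  have hB0 : 0 < B := by positivity
  have hBt : B ^ (α / 2) = t := by
    rw [hB, ← rpow_mul ht.le, show 2 / α * (α / 2) = 1 by field_simp, rpow_one]
  have hφA := scaleDenom_nonneg ζ α hA hb
  have hφB := scaleDenom_pos ζ α hB0 hb
  constructor
  · set a := max A B
    have ha : 0 < a := lt_max_of_lt_right hB0
    have hφ : scaleDenom ζ α b a ≤ scaleDenom ζ α b A + scaleDenom ζ α b B := by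
      rcases max_choice A B with h | h <;> simp only [a, h] <;> linarith
    have hta : t * a⁻¹ ^ (α / 2) ≤ 1 := by
      rw [inv_rpow ha.le, ← div_eq_mul_inv, div_le_one (by positivity)]
      calc t = B ^ (α / 2) := hBt.symm
        _ ≤ a ^ (α / 2) := by gcongr; exact le_max_right _ _
    have h := hWb t _ ht hμ b (3 * A / 8) a hb (by positivity) ha
      (by linarith [le_max_left A B]) hta
    rw [mul_rpow_eq_div_scaleDenom ζ α t ha hb] at h
    refine le_trans ?_ ((mul_le_mul_of_nonneg_left h ha₁.le).trans hK1)
    calc a₁ * W / κ * t / D = a₁ * (W * (t / (κ * D))) := by field_simp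
      _ ≤ a₁ * (W * (t / scaleDenom ζ α b a)) := by
        have := scaleDenom_pos ζ α ha hb
        gcongr
        exact hφ.trans hD2
  · set I := ∫ τ, gaussWeight ζ b (A / 8) τ ∂(subordinatorMeasure σ t) with hI
    have hI0 : 0 ≤ I :=
      integral_nonneg_of_ae (hμ.ae_pos.mono fun τ hτ => gaussWeight_nonneg ζ _ hb hτ)
    have h1 : I * scaleDenom ζ α b B ≤ U * t := by
      have h := (hUb t _ ht hμ b (A / 8) hb (by positivity)).2
      have e := mul_rpow_eq_div_scaleDenom ζ α t hB0 hb
      rw [inv_rpow hB0.le, hBt, mul_inv_cancel₀ ht.ne', one_mul] at e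
      rwa [← hB, e, ← mul_div_assoc, le_div_iff₀ hφB] at h
    have h2 : I * scaleDenom ζ α b A ≤ V * t := by
      rcases hA.eq_or_lt with h0 | h0
      · rw [← h0, scaleDenom, zero_rpow (by positivity), zero_mul, mul_zero]
        positivity
      · have h := hVb t _ ht hμ b A hb h0
        rwa [mul_rpow_eq_div_scaleDenom ζ α t h0 hb, ← mul_div_assoc,
          le_div_iff₀ (scaleDenom_pos ζ α h0 hb)] at h
    refine hK2.trans ?_
    rw [le_div_iff₀ hDpos]
    calc A₁ * I * D ≤ A₁ * I * (κ * (scaleDenom ζ α b A + scaleDenom ζ α b B)) := by gcongr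
      _ = A₁ * κ * (I * scaleDenom ζ α b A + I * scaleDenom ζ α b B) := by ring
      _ ≤ A₁ * κ * (V * t + U * t) := by gcongr
      _ = _ := by ring
end
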